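/- arXiv:1105.5763 — 3 statements merged into one kernel-verified Lean document; each statement's English description precedes it below -/
import Mathlib

section
/- For every n ≥ 1 and every k ≥ 1, the set Σ_n(k) is finite and its cardinality equals n^{k−1} · C(n, k+1), where C(n, k+1) is the binomial coefficient. -/
/-- ℓ(σ): the number of cycles (orbits) of σ, including fixed points, counted via the
minimal representative of each orbit. -/
noncomputable def cycleCount {n : ℕ} (σ : Equiv.Perm (Fin n)) : ℕ :=
  Set.ncard {x : Fin n | ∀ y, σ.SameCycle x y → x ≤ y}

/-- |σ| := n − ℓ(σ). -/
noncomputable def normPerm {n : ℕ} (σ : Equiv.Perm (Fin n)) : ℕ := n - cycleCount σ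

/-- σ₁ ≼ σ₂ iff |σ₂| = |σ₁| + |σ₁⁻¹σ₂|. -/
def precLe {n : ℕ} (σ₁ σ₂ : Equiv.Perm (Fin n)) : Prop :=
  normPerm σ₂ = normPerm σ₁ + normPerm (σ₁⁻¹ * σ₂)

/-- Σ_n(k): tuples of k transpositions with |τ₁⋯τ_k| = k and τ₁⋯τ_k ≼ (1 … n). -/
def SigmaSet (n k : ℕ) : Set (Fin k → Equiv.Perm (Fin n)) :=
  {τ | (∀ l, (τ l).IsSwap) ∧ normPerm (List.ofFn τ).prod = k ∧
      precLe (List.ofFn τ).prod (finRotate n)}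

/-- γ_m := τ₁∘⋯∘τ_m, the product of the first m entries of the chain. -/
def gammaP {n k : ℕ} (τ : Fin k → Equiv.Perm (Fin n)) (m : ℕ) : Equiv.Perm (Fin n) :=
  ((List.ofFn τ).take m).prod

/-!
A transposition shortens a permutation exactly when it cuts one of its cycles in two, so `Σ_n(k)`
counts the ways to cut an `n`-cycle `k` times in succession. Different cycles are cut
independently. Hence the exponential generating function (in the number `k` of cuts) of a
permutation is the product of the series `g_m(t)` of its cycles, and recording the lengths `i` and
`j` of the two pieces gives `g_m' = (m / 2) ∑_{i + j = m} g_i g_j`. For `W = ∑_m g_m(t) x^m` and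
`θ = x ∂/∂x` this is the inviscid Burgers equation `∂W/∂t = W · θ W`, whose solutions satisfy
`∂^k W/∂t^k = θ^k (W^(k+1)) / (k+1)`. At `t = 0`, where `W = x / (1 - x)`, the coefficient of `x^n`
is `n^k C(n-1, k) / (k+1) = n^(k-1) C(n, k+1)`.
-/

section Burgers

variable {R S A : Type*} [CommSemiring R] [CommSemiring S] [CommSemiring A] [Algebra R A]
  [Algebra S A] {δ : Derivation R A A} {θ : Derivation S A A} {w : A}

theorem iterate_succ_apply_of_burgers (hcomm : Function.Commute δ θ) (hw : δ w = w * θ w) (k : ℕ) :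
    δ^[k + 1] w = θ^[k] (w ^ (k + 1) * θ w) := by
  induction k with
  | zero => simpa using hw
  | succ k ih =>
    have hstep : δ (w ^ (k + 1) * θ w) = θ (w ^ (k + 2) * θ w) := by
      simp only [Derivation.leibniz, Derivation.leibniz_pow, hcomm.eq w, hw, smul_eq_mul,
        nsmul_eq_mul, Nat.add_sub_cancel]
      push_cast
      ring
    rw [Function.iterate_succ_apply', ih, (hcomm.iterate_right k).eq, hstep,
      ← Function.iterate_succ_apply]

theorem succ_nsmul_iterate_of_burgers (hcomm : Function.Commute δ θ) (hw : δ w = w * θ w) (k : ℕ) :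
    (k + 1) • δ^[k] w = θ^[k] (w ^ (k + 1)) := by
  cases k with
  | zero => simp
  | succ k =>
    rw [iterate_succ_apply_of_burgers hcomm hw, ← iterate_map_nsmul, Function.iterate_succ_apply,
      Derivation.leibniz_pow, Nat.add_sub_cancel, smul_eq_mul]

end Burgers

section PowerSeriesDerivations

open Finset.HasAntidiagonal (antidiagonal)
open PowerSeries

variable {R A : Type*} [CommRing R] [CommRing A] [Algebra R A]

/-- The derivation of `A⟦X⟧` that applies a derivation `D` of `A` to every coefficient. -/
noncomputable def coeffwiseDerivation (D : Derivation R A A) : Derivation R A⟦X⟧ A⟦X⟧ :=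
  Derivation.mk'
    { toFun := fun F => mk fun m => D (coeff m F)
      map_add' := fun F G => by ext m; simp
      map_smul' := fun r F => by ext m; simp }
    fun F G => by
      ext m
      simp only [LinearMap.coe_mk, AddHom.coe_mk, coeff_mk, map_add, smul_eq_mul, coeff_mul,
        map_sum, Derivation.leibniz, Finset.sum_add_distrib]
      rw [← Finset.Nat.sum_antidiagonal_swap (f := fun p => coeff p.1 G * D (coeff p.2 F))]
      rfl

theorem coeff_coeffwiseDerivation (D : Derivation R A A) (F : A⟦X⟧) (m : ℕ) :
    coeff m (coeffwiseDerivation D F) = D (coeff m F) := by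
  simp [coeffwiseDerivation]

theorem coeff_iterate_coeffwiseDerivation (D : Derivation R A A) (F : A⟦X⟧) (m k : ℕ) :
    coeff m ((coeffwiseDerivation D)^[k] F) = D^[k] (coeff m F) :=
  Function.Semiconj.iterate_right (fun F => coeff_coeffwiseDerivation D F m) k F

variable (A) in
/-- The Euler operator `X · d/dX`, multiplying the `m`-th coefficient by `m`. -/
noncomputable def eulerDerivation : Derivation A A⟦X⟧ A⟦X⟧ :=
  (X : A⟦X⟧) • derivative A

theorem coeff_eulerDerivation (F : A⟦X⟧) (m : ℕ) :
    coeff m (eulerDerivation A F) = m * coeff m F := by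
  cases m with
  | zero => simp [eulerDerivation]
  | succ m => simp [eulerDerivation, coeff_succ_X_mul, coeff_derivative, mul_comm]

theorem coeff_iterate_eulerDerivation (F : A⟦X⟧) (m k : ℕ) :
    coeff m ((eulerDerivation A)^[k] F) = (m : A) ^ k * coeff m F := by
  have h : Function.Semiconj (coeff m) (eulerDerivation A) (fun a : A => m * a) :=
    fun F => coeff_eulerDerivation F m
  rw [h.iterate_right k, mul_left_iterate]

theorem commute_coeffwiseDerivation_eulerDerivation (D : Derivation R A A) :
    Function.Commute (coeffwiseDerivation D) (eulerDerivation A) := fun F => by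
  ext m
  simp [coeff_coeffwiseDerivation, coeff_eulerDerivation]

theorem succ_nsmul_iterate_of_convolution_ode {D : Derivation R A A} {f : ℕ → A}
    (hf : ∀ m, D (f m) = ∑ p ∈ antidiagonal m, f p.1 * (p.2 * f p.2)) (m k : ℕ) :
    (k + 1) • D^[k] (f m) = (m : A) ^ k * coeff m (mk f ^ (k + 1)) := by
  have hburgers : coeffwiseDerivation D (mk f) = mk f * eulerDerivation A (mk f) := by
    ext m
    simp only [coeff_coeffwiseDerivation, coeff_mk, hf, coeff_mul, coeff_eulerDerivation]
  have h := congrArg (coeff m) (succ_nsmul_iterate_of_burgers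
    (commute_coeffwiseDerivation_eulerDerivation D) hburgers k)
  rwa [coeff_iterate_eulerDerivation, map_nsmul, coeff_iterate_coeffwiseDerivation, coeff_mk] at h

/-- The formal antiderivative with vanishing constant term. -/
noncomputable def antiderivative {K : Type*} [Field K] (f : K⟦X⟧) : K⟦X⟧ :=
  X * mk fun k => coeff k f / (k + 1)

theorem derivative_antiderivative {K : Type*} [Field K] [CharZero K] (f : K⟦X⟧) :
    derivative K (antiderivative f) = f := by
  ext k
  rw [coeff_derivative, antiderivative, coeff_succ_X_mul, coeff_mk,
    div_mul_cancel₀ _ (Nat.cast_add_one_ne_zero k)]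

theorem constantCoeff_antiderivative {K : Type*} [Field K] (f : K⟦X⟧) :
    constantCoeff (antiderivative f) = 0 := by
  simp [antiderivative]

theorem coeff_succ_geom_pow (m k : ℕ) :
    coeff (m + 1) ((X * mk 1 : A⟦X⟧) ^ (k + 1)) = (m.choose k : A) := by
  rw [mul_pow, mk_one_pow_eq_mk_choose_add, coeff_X_pow_mul', Nat.add_sub_add_right, coeff_mk]
  split_ifs with hkm
  · rw [Nat.add_sub_cancel' (Nat.le_of_succ_le_succ hkm)]
  · rw [Nat.choose_eq_zero_of_lt (by omega), Nat.cast_zero]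

end PowerSeriesDerivations

section CycleSeries

open Finset.HasAntidiagonal (antidiagonal)
open PowerSeries Nat

/-- The exponential generating function `∑ₖ Nₖ tᵏ / k!`, where `Nₖ` is the number of ways to start
a minimal factorization of an `m`-cycle with `k` transpositions. It is encoded as the solution of
the differential equation expressing that the first transposition cuts the cycle into two; there
is no cycle of length `0`, and `cycleSeries 0 = 0`. -/
noncomputable def cycleSeries (m : ℕ) : ℚ⟦X⟧ :=
  C (if m = 0 then 0 else 1) + antiderivative
    (∑ j ∈ (Finset.Ico 1 m).attach, cycleSeries (m - j) * ((j.1 : ℚ⟦X⟧) * cycleSeries j))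
termination_by m
decreasing_by
  all_goals
    have := Finset.mem_Ico.1 j.2
    omega

theorem cycleSeries_zero : cycleSeries 0 = 0 := by
  rw [cycleSeries, Finset.sum_attach _ fun j => cycleSeries (0 - j) * (j * cycleSeries j)]
  ext k
  cases k <;> simp [antiderivative, coeff_succ_X_mul]

theorem constantCoeff_cycleSeries {m : ℕ} (hm : m ≠ 0) : constantCoeff (cycleSeries m) = 1 := by
  rw [cycleSeries, map_add, constantCoeff_antiderivative, constantCoeff_C, if_neg hm, add_zero]

theorem derivative_cycleSeries (m : ℕ) : derivative ℚ (cycleSeries m) =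
    ∑ j ∈ Finset.Ico 1 m, cycleSeries (m - j) * (j * cycleSeries j) := by
  rw [cycleSeries, map_add, derivative_C, zero_add, derivative_antiderivative,
    Finset.sum_attach _ fun j => cycleSeries (m - j) * (j * cycleSeries j)]

theorem derivative_cycleSeries_eq_sum_antidiagonal (m : ℕ) : derivative ℚ (cycleSeries m) =
    ∑ p ∈ antidiagonal m, cycleSeries p.1 * (p.2 * cycleSeries p.2) := by
  rw [derivative_cycleSeries, ← Finset.Nat.sum_antidiagonal_swap,
    Finset.Nat.sum_antidiagonal_eq_sum_range_succ_mk]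
  refine Finset.sum_subset (fun j hj => ?_) fun j hj hj' => ?_
  · rw [Finset.mem_Ico] at hj
    exact Finset.mem_range.2 (by omega)
  · rw [Finset.mem_range] at hj
    rw [Finset.mem_Ico] at hj'
    have hj_end : j = 0 ∨ j = m := by omega
    rcases hj_end with rfl | rfl <;> simp [cycleSeries_zero]

theorem two_nsmul_derivative_cycleSeries (m : ℕ) : 2 • derivative ℚ (cycleSeries m) =
    m • ∑ j ∈ Finset.Ico 1 m, cycleSeries j * cycleSeries (m - j) := by
  have hreflect : derivative ℚ (cycleSeries m) =
      ∑ j ∈ Finset.Ico 1 m, cycleSeries j * ((m - j : ℕ) * cycleSeries (m - j)) := by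
    have h := Finset.sum_Ico_reflect
      (fun j => cycleSeries (m - j) * (j * cycleSeries j)) 1 m.le_succ
    rw [Nat.add_sub_cancel_left, Nat.add_sub_cancel] at h
    rw [derivative_cycleSeries, ← h]
    refine Finset.sum_congr rfl fun j hj => ?_
    rw [Nat.sub_sub_self (Finset.mem_Ico.1 hj).2.le]
  rw [two_nsmul]
  nth_rw 1 [derivative_cycleSeries]
  rw [hreflect, ← Finset.sum_add_distrib, Finset.smul_sum]
  refine Finset.sum_congr rfl fun j hj => ?_
  rw [nsmul_eq_mul, Nat.cast_sub (Finset.mem_Ico.1 hj).2.le]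
  ring

theorem map_constantCoeff_mk_cycleSeries :
    map constantCoeff (mk cycleSeries) = (X * mk 1 : ℚ⟦X⟧) := by
  ext m
  cases m with
  | zero => simp [cycleSeries_zero]
  | succ m => simp [constantCoeff_cycleSeries (Nat.succ_ne_zero m), coeff_succ_X_mul]

theorem succ_mul_factorial_mul_coeff_cycleSeries (m k : ℕ) :
    (k + 1) * (k ! * coeff k (cycleSeries (m + 1))) = ((m + 1) ^ k * m.choose k : ℚ) := by
  have h := congrArg constantCoeff
    (succ_nsmul_iterate_of_convolution_ode derivative_cycleSeries_eq_sum_antidiagonal (m + 1) k)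
  have hpow : constantCoeff (coeff (m + 1) (mk cycleSeries ^ (k + 1))) = (m.choose k : ℚ) := by
    rw [← coeff_map, map_pow, map_constantCoeff_mk_cycleSeries, coeff_succ_geom_pow]
  simpa [hpow, constantCoeff_iterate_derivative] using h

theorem factorial_mul_coeff_succ_cycleSeries (m k : ℕ) :
    (k + 1)! * coeff (k + 1) (cycleSeries m) = (m ^ k * m.choose (k + 2) : ℚ) := by
  cases m with
  | zero => simp [cycleSeries_zero]
  | succ m =>
    have hchoose : ((m + 1) * m.choose (k + 1) : ℚ) = (m + 1).choose (k + 2) * (k + 2) :=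
      mod_cast Nat.add_one_mul_choose_eq m (k + 1)
    have hcoeff := succ_mul_factorial_mul_coeff_cycleSeries m (k + 1)
    refine mul_left_cancel₀ (Nat.cast_add_one_ne_zero (R := ℚ) (k + 1)) ?_
    rw [hcoeff]
    push_cast
    linear_combination (m + 1 : ℚ) ^ k * hchoose

end CycleSeries

section FiniteSums

open Finset

theorem sum_part_eq_sum_card_nsmul {α M : Type*} [DecidableEq α] [AddCommMonoid M] {s : Finset α}
    (P : Finpartition s) (f : Finset α → M) :
    ∑ a ∈ s, f (P.part a) = ∑ O ∈ P.parts, #O • f O := by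
  have hpart : ∀ O ∈ P.parts, ∑ a ∈ O, f (P.part a) = #O • f O := fun O hO =>
    sum_eq_card_nsmul fun a ha => by rw [P.part_eq_of_mem hO ha]
  rw [← sum_congr rfl hpart]
  exact (sum_congr P.biUnion_parts.symm fun _ _ => rfl).trans
    (sum_biUnion P.supIndep.pairwiseDisjoint)

theorem derivation_prod {R A ι : Type*} [CommSemiring R] [CommSemiring A] [Algebra R A]
    [DecidableEq ι] (D : Derivation R A A) (s : Finset ι) (f : ι → A) :
    D (∏ i ∈ s, f i) = ∑ i ∈ s, D (f i) * ∏ j ∈ s.erase i, f j := by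
  induction s using Finset.induction_on with
  | empty => simp
  | insert a s ha ih =>
    have herase : ∀ i ∈ s, ∏ j ∈ (insert a s).erase i, f j = f a * ∏ j ∈ s.erase i, f j := by
      intro i hi
      rw [erase_insert_of_ne (ne_of_mem_of_not_mem hi ha).symm,
        prod_insert fun h => ha (mem_of_mem_erase h)]
    rw [prod_insert ha, Derivation.leibniz, ih, sum_insert ha, erase_insert ha, smul_eq_mul,
      smul_eq_mul, mul_sum, add_comm, mul_comm (D (f a))]
    congr 1
    exact sum_congr rfl fun i hi => by rw [herase i hi, mul_left_comm]

end FiniteSums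

section CyclePartition

open Finset Equiv Equiv.Perm

variable {α : Type*} [Fintype α] [DecidableEq α] {σ : Perm α} {a b x y : α} {j : ℕ}

open Classical in
/-- The partition of `α` into the cycles of `σ`, each fixed point being a cycle of its own. -/
noncomputable def cyclePartition (σ : Perm α) : Finpartition (univ : Finset α) :=
  Finpartition.ofSetoid (SameCycle.setoid σ)

theorem mem_part_cyclePartition : y ∈ (cyclePartition σ).part x ↔ σ.SameCycle x y := by
  classical
  exact Finpartition.mem_part_ofSetoid_iff_rel (s := SameCycle.setoid σ)

theorem self_mem_part_cyclePartition (σ : Perm α) (x : α) : x ∈ (cyclePartition σ).part x :=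
  mem_part_cyclePartition.2 (.refl σ x)

theorem part_cyclePartition_eq_iff :
    (cyclePartition σ).part x = (cyclePartition σ).part y ↔ σ.SameCycle x y := by
  rw [← (cyclePartition σ).mem_part_iff_part_eq_part (mem_univ x) (mem_univ y),
    mem_part_cyclePartition, sameCycle_comm]

theorem mem_parts_cyclePartition {O : Finset α} :
    O ∈ (cyclePartition σ).parts ↔ ∃ x, (cyclePartition σ).part x = O := by
  refine ⟨fun hO => ?_, ?_⟩
  · obtain ⟨x, -, hx⟩ := (cyclePartition σ).part_surjOn hO
    exact ⟨x, hx⟩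
  · rintro ⟨x, rfl⟩
    exact (cyclePartition σ).part_mem.2 (mem_univ x)

theorem isCycleOn_part_cyclePartition (σ : Perm α) (x : α) :
    σ.IsCycleOn ((cyclePartition σ).part x) := by
  refine ⟨σ.bijOn fun y => ?_, fun y hy z hz => ?_⟩
  · simp [mem_part_cyclePartition]
  · rw [Finset.mem_coe, mem_part_cyclePartition] at hy hz
    exact hy.symm.trans hz

theorem card_part_cyclePartition_pos (σ : Perm α) (x : α) : 0 < #((cyclePartition σ).part x) :=
  card_pos.2 ⟨x, self_mem_part_cyclePartition σ x⟩

theorem pow_card_part_apply (σ : Perm α) (a : α) : (σ ^ #((cyclePartition σ).part a)) a = a :=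
  (isCycleOn_part_cyclePartition σ a).pow_card_apply (self_mem_part_cyclePartition σ a)

theorem pow_apply_injOn_Iio (σ : Perm α) (a : α) :
    Set.InjOn (fun i => (σ ^ i) a) (Set.Iio #((cyclePartition σ).part a)) := fun _ hi _ hk h =>
  (((isCycleOn_part_cyclePartition σ a).pow_apply_eq_pow_apply
    (self_mem_part_cyclePartition σ a)).1 h).eq_of_lt_of_lt hi hk

theorem part_cyclePartition_eq_image_of_pow_apply_eq (hj : 0 < j) (h : (σ ^ j) a = a) :
    (cyclePartition σ).part a = (range j).image fun i => (σ ^ i) a := by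
  ext y
  simp only [mem_part_cyclePartition, mem_image, mem_range]
  constructor
  · intro hy
    obtain ⟨i, rfl⟩ := hy.exists_nat_pow_eq
    refine ⟨i % j, Nat.mod_lt i hj, ?_⟩
    have hper : Function.IsPeriodicPt σ j a := by
      rwa [Function.IsPeriodicPt, Function.IsFixedPt, iterate_eq_pow]
    simpa only [iterate_eq_pow] using hper.iterate_mod_apply i
  · rintro ⟨i, -, rfl⟩
    exact sameCycle_pow_right.2 (.refl σ a)

theorem bijOn_pow_apply_part_erase (σ : Perm α) (a : α) : Set.BijOn (fun i => (σ ^ i) a)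
    (Ico 1 #((cyclePartition σ).part a)) (((cyclePartition σ).part a).erase a) := by
  refine ⟨fun i hi => ?_, fun i hi k hk h => ?_, fun b hb => ?_⟩
  · rw [coe_Ico, Set.mem_Ico] at hi
    refine mem_coe.2 (mem_erase.2 ⟨fun h => ?_, ?_⟩)
    · exact Nat.one_le_iff_ne_zero.1 hi.1
        (pow_apply_injOn_Iio σ a hi.2 (card_part_cyclePartition_pos σ a) h)
    · exact mem_part_cyclePartition.2 (sameCycle_pow_right.2 (.refl σ a))
  · rw [coe_Ico, Set.mem_Ico] at hi hk
    exact pow_apply_injOn_Iio σ a hi.2 hk.2 h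
  · rw [mem_coe, mem_erase] at hb
    obtain ⟨i, hi, rfl⟩ := (isCycleOn_part_cyclePartition σ a).exists_pow_eq
      (self_mem_part_cyclePartition σ a) hb.2
    refine ⟨i, coe_Ico 1 _ ▸ ⟨Nat.one_le_iff_ne_zero.2 ?_, hi⟩, rfl⟩
    rintro rfl
    exact hb.1 rfl

theorem exists_pow_apply_eq_of_sameCycle (hab : a ≠ b) (h : σ.SameCycle a b) :
    ∃ j, 0 < j ∧ j < #((cyclePartition σ).part a) ∧ (σ ^ j) a = b := by
  obtain ⟨j, hj, rfl⟩ := (bijOn_pow_apply_part_erase σ a).surjOn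
    (mem_coe.2 (mem_erase.2 ⟨hab.symm, mem_part_cyclePartition.2 h⟩))
  exact ⟨j, (mem_Ico.1 hj).1, (mem_Ico.1 hj).2, rfl⟩

end CyclePartition

section SwapMul

open Equiv

variable {α : Type*} [DecidableEq α] {σ : Perm α} {a b x : α} {i j : ℕ}

theorem swap_mul_pow_apply_of_lt
    (h : ∀ i, 0 < i → i < j → (σ ^ i) x ≠ a ∧ (σ ^ i) x ≠ b) (hij : i < j) :
    ((swap a b * σ) ^ i) x = (σ ^ i) x := by
  induction i with
  | zero => rfl
  | succ i ih =>
    obtain ⟨ha, hb⟩ := h (i + 1) i.succ_pos hij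
    rw [pow_succ', Perm.mul_apply] at ha hb ⊢
    rw [ih (by omega), Perm.mul_apply, swap_apply_of_ne_of_ne ha hb, pow_succ', Perm.mul_apply]

theorem swap_mul_pow_apply (hj : 0 < j)
    (h : ∀ i, 0 < i → i < j → (σ ^ i) x ≠ a ∧ (σ ^ i) x ≠ b) :
    ((swap a b * σ) ^ j) x = swap a b ((σ ^ j) x) := by
  obtain ⟨j, rfl⟩ := Nat.exists_eq_add_of_le' hj
  rw [pow_succ', Perm.mul_apply, swap_mul_pow_apply_of_lt h j.lt_succ_self, Perm.mul_apply,
    pow_succ', Perm.mul_apply]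

end SwapMul

section CuttingCycles

open Finset Equiv Equiv.Perm

variable {α : Type*} [Fintype α] [DecidableEq α] {σ : Perm α} {a : α} {i j : ℕ}

theorem pow_apply_ne_of_lt (hj : j < #((cyclePartition σ).part a)) (hi : 0 < i) (hij : i < j) :
    (σ ^ i) a ≠ a ∧ (σ ^ i) a ≠ (σ ^ j) a := by
  have hi' := hij.trans hj
  exact ⟨fun h => hi.ne' (pow_apply_injOn_Iio σ a hi' (hi.trans hi') h),
    fun h => hij.ne (pow_apply_injOn_Iio σ a hi' hj h)⟩

theorem part_swap_mul_left (hj : 0 < j) (hjm : j < #((cyclePartition σ).part a)) :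
    (cyclePartition (swap a ((σ ^ j) a) * σ)).part a = (range j).image fun i => (σ ^ i) a := by
  have havoid : ∀ i, 0 < i → i < j → (σ ^ i) a ≠ a ∧ (σ ^ i) a ≠ (σ ^ j) a := fun _ =>
    pow_apply_ne_of_lt hjm
  rw [part_cyclePartition_eq_image_of_pow_apply_eq hj
    (by rw [swap_mul_pow_apply hj havoid, swap_apply_right])]
  exact image_congr fun i hi => swap_mul_pow_apply_of_lt havoid (by simpa using hi)

theorem card_part_swap_mul_left (hj : 0 < j) (hjm : j < #((cyclePartition σ).part a)) :
    #((cyclePartition (swap a ((σ ^ j) a) * σ)).part a) = j := by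
  rw [part_swap_mul_left hj hjm, card_image_of_injOn, card_range]
  rw [coe_range]
  exact (pow_apply_injOn_Iio σ a).mono (Set.Iio_subset_Iio hjm.le)

theorem card_part_swap_mul_right (hj : 0 < j) (hjm : j < #((cyclePartition σ).part a)) :
    #((cyclePartition (swap a ((σ ^ j) a) * σ)).part ((σ ^ j) a)) =
      #((cyclePartition σ).part a) - j := by
  have hpart : (cyclePartition σ).part ((σ ^ j) a) = (cyclePartition σ).part a :=
    part_cyclePartition_eq_iff.2 (sameCycle_pow_left.2 (.refl σ a))
  have hreturn : (σ ^ (#((cyclePartition σ).part a) - j)) ((σ ^ j) a) = a := by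
    rw [← Perm.mul_apply, ← pow_add, Nat.sub_add_cancel hjm.le, pow_card_part_apply]
  have h := card_part_swap_mul_left (σ := σ) (a := (σ ^ j) a)
    (j := #((cyclePartition σ).part a) - j) (by omega) (by rw [hpart]; omega)
  rwa [hreturn, swap_comm] at h

end CuttingCycles

section SameCycleSwapMul

open Finset Equiv Equiv.Perm

variable {α : Type*} [Finite α] [DecidableEq α] {σ : Perm α} {a b x y : α}

theorem not_sameCycle_swap_mul (hab : a ≠ b) (h : σ.SameCycle a b) :
    ¬(swap a b * σ).SameCycle a b := by
  cases nonempty_fintype α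
  obtain ⟨j, hj, hjm, rfl⟩ := exists_pow_apply_eq_of_sameCycle hab h
  rw [← mem_part_cyclePartition, part_swap_mul_left hj hjm, mem_image]
  rintro ⟨i, hi, hij⟩
  have hi' := mem_range.1 hi
  exact hi'.ne (pow_apply_injOn_Iio σ a (hi'.trans hjm) hjm hij)

theorem sameCycle_swap_mul_of_not (h : ¬σ.SameCycle a b) : (swap a b * σ).SameCycle a b := by
  cases nonempty_fintype α
  have havoid : ∀ i, 0 < i → i < #((cyclePartition σ).part a) → (σ ^ i) a ≠ a ∧ (σ ^ i) a ≠ b := by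
    refine fun i hi him => ⟨fun hia => ?_, fun hib => h (hib ▸ sameCycle_pow_right.2 (.refl σ a))⟩
    exact hi.ne' (pow_apply_injOn_Iio σ a him (card_part_cyclePartition_pos σ a) hia)
  have hb := swap_mul_pow_apply (card_part_cyclePartition_pos σ a) havoid
  rw [pow_card_part_apply, swap_apply_left] at hb
  exact ⟨_, (zpow_natCast (swap a b * σ) _).symm ▸ hb⟩

theorem sameCycle_swap_mul_iff_of_not (hab : σ.SameCycle a b) (hx : ¬σ.SameCycle a x) :
    (swap a b * σ).SameCycle x y ↔ σ.SameCycle x y := by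
  have hx_pow (i : ℕ) : σ.SameCycle x ((σ ^ i) x) := sameCycle_pow_right.2 (.refl σ x)
  have havoid (i : ℕ) : (σ ^ i) x ≠ a ∧ (σ ^ i) x ≠ b :=
    ⟨fun h => hx (h ▸ hx_pow i).symm, fun h => hx (hab.trans (h ▸ hx_pow i).symm)⟩
  have hpow (i : ℕ) : ((swap a b * σ) ^ i) x = (σ ^ i) x :=
    swap_mul_pow_apply_of_lt (fun i _ _ => havoid i) i.lt_succ_self
  constructor <;> intro hy <;> obtain ⟨i, rfl⟩ := hy.exists_nat_pow_eq
  · exact hpow i ▸ hx_pow i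
  · exact hpow i ▸ sameCycle_pow_right.2 (.refl _ x)

theorem sameCycle_of_sameCycle_swap_mul (hab : σ.SameCycle a b)
    (hx : (swap a b * σ).SameCycle a x) : σ.SameCycle a x := by
  by_contra hx'
  exact hx' ((sameCycle_swap_mul_iff_of_not hab hx').1 hx.symm).symm

end SameCycleSwapMul

section CycleSplitting

open Finset Equiv Equiv.Perm

variable {α : Type*} [Fintype α] [DecidableEq α] {σ : Perm α} {a b x : α}

theorem part_swap_mul_of_not_sameCycle (hab : σ.SameCycle a b) (hx : ¬σ.SameCycle a x) :
    (cyclePartition (swap a b * σ)).part x = (cyclePartition σ).part x := by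
  ext y
  rw [mem_part_cyclePartition, mem_part_cyclePartition, sameCycle_swap_mul_iff_of_not hab hx]

theorem part_swap_mul_union_part_swap_mul (hab : a ≠ b) (h : σ.SameCycle a b) :
    (cyclePartition (swap a b * σ)).part a ∪ (cyclePartition (swap a b * σ)).part b =
      (cyclePartition σ).part a := by
  have hdisj : Disjoint ((cyclePartition (swap a b * σ)).part a)
      ((cyclePartition (swap a b * σ)).part b) := by
    refine Finset.disjoint_left.2 fun x hxa hxb => not_sameCycle_swap_mul hab h ?_
    exact (mem_part_cyclePartition.1 hxa).trans (mem_part_cyclePartition.1 hxb).symm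
  have hsub : (cyclePartition (swap a b * σ)).part a ∪ (cyclePartition (swap a b * σ)).part b ⊆
      (cyclePartition σ).part a := by
    intro x hx
    rw [mem_union, mem_part_cyclePartition, mem_part_cyclePartition] at hx
    rw [mem_part_cyclePartition]
    rcases hx with hxa | hxb
    · exact sameCycle_of_sameCycle_swap_mul h hxa
    · exact h.trans (sameCycle_of_sameCycle_swap_mul h.symm (swap_comm a b ▸ hxb))
  refine eq_of_subset_of_card_le hsub ?_
  obtain ⟨j, hj, hjm, rfl⟩ := exists_pow_apply_eq_of_sameCycle hab h
  rw [card_union_of_disjoint hdisj, card_part_swap_mul_left hj hjm,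
    card_part_swap_mul_right hj hjm]
  omega

theorem parts_swap_mul (hab : a ≠ b) (h : σ.SameCycle a b) :
    (cyclePartition (swap a b * σ)).parts = insert ((cyclePartition (swap a b * σ)).part a)
      (insert ((cyclePartition (swap a b * σ)).part b)
        ((cyclePartition σ).parts.erase ((cyclePartition σ).part a))) := by
  ext O
  rw [mem_insert, mem_insert, mem_erase, mem_parts_cyclePartition, mem_parts_cyclePartition]
  constructor
  · rintro ⟨x, rfl⟩
    by_cases hx : σ.SameCycle a x
    · rw [← mem_part_cyclePartition, ← part_swap_mul_union_part_swap_mul hab h, mem_union,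
        mem_part_cyclePartition, mem_part_cyclePartition, sameCycle_comm (x := a),
        sameCycle_comm (x := b)] at hx
      exact hx.imp part_cyclePartition_eq_iff.2 fun hb => .inl (part_cyclePartition_eq_iff.2 hb)
    · rw [part_swap_mul_of_not_sameCycle h hx]
      exact .inr (.inr ⟨fun hxa => hx (part_cyclePartition_eq_iff.1 hxa).symm, x, rfl⟩)
  · rintro (rfl | rfl | ⟨hne, x, rfl⟩)
    · exact ⟨a, rfl⟩
    · exact ⟨b, rfl⟩
    · exact ⟨x, part_swap_mul_of_not_sameCycle h fun hax =>
        hne (part_cyclePartition_eq_iff.2 hax.symm)⟩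

theorem part_swap_mul_notMem_erase (hx : x ∈ (cyclePartition σ).part a) :
    (cyclePartition (swap a b * σ)).part x ∉
      (cyclePartition σ).parts.erase ((cyclePartition σ).part a) := fun hmem =>
  (mem_erase.1 hmem).1 ((cyclePartition σ).eq_of_mem_parts (mem_erase.1 hmem).2
    (mem_parts_cyclePartition.2 ⟨a, rfl⟩) (self_mem_part_cyclePartition _ x) hx)

theorem part_swap_mul_notMem_insert (hab : a ≠ b) (h : σ.SameCycle a b) :
    (cyclePartition (swap a b * σ)).part a ∉ insert ((cyclePartition (swap a b * σ)).part b)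
      ((cyclePartition σ).parts.erase ((cyclePartition σ).part a)) := by
  rw [mem_insert, part_cyclePartition_eq_iff]
  exact not_or.2 ⟨not_sameCycle_swap_mul hab h,
    part_swap_mul_notMem_erase (self_mem_part_cyclePartition σ a)⟩

theorem prod_parts_swap_mul {M : Type*} [CommMonoid M] (f : Finset α → M) (hab : a ≠ b)
    (h : σ.SameCycle a b) :
    ∏ O ∈ (cyclePartition (swap a b * σ)).parts, f O =
      f ((cyclePartition (swap a b * σ)).part a) * (f ((cyclePartition (swap a b * σ)).part b) *
        ∏ O ∈ (cyclePartition σ).parts.erase ((cyclePartition σ).part a), f O) := by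
  rw [parts_swap_mul hab h, prod_insert (part_swap_mul_notMem_insert hab h),
    prod_insert (part_swap_mul_notMem_erase (mem_part_cyclePartition.2 h))]

end CycleSplitting

section TranspositionLength

open Finset Equiv Equiv.Perm

variable {α : Type*} [Fintype α] [DecidableEq α] {σ τ : Perm α} {a b : α}

/-- The number of cycles of `σ`, fixed points included: `ℓ(σ)` over an arbitrary finite type. -/
noncomputable def numCycles (σ : Perm α) : ℕ :=
  #(cyclePartition σ).parts

/-- The length `|σ|` over an arbitrary finite type: the minimal number of transpositions with
product `σ`. -/
noncomputable def transpositionLength (σ : Perm α) : ℕ :=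
  Fintype.card α - numCycles σ

theorem transpositionLength_add_numCycles (σ : Perm α) :
    transpositionLength σ + numCycles σ = Fintype.card α :=
  Nat.sub_add_cancel (cyclePartition σ).card_parts_le_card

theorem numCycles_swap_mul (hab : a ≠ b) (h : σ.SameCycle a b) :
    numCycles (swap a b * σ) = numCycles σ + 1 := by
  rw [numCycles, numCycles, parts_swap_mul hab h,
    card_insert_of_notMem (part_swap_mul_notMem_insert hab h),
    card_insert_of_notMem (part_swap_mul_notMem_erase (mem_part_cyclePartition.2 h)),
    card_erase_add_one (mem_parts_cyclePartition.2 ⟨a, rfl⟩)]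

theorem transpositionLength_swap_mul_add_one (hab : a ≠ b) (h : σ.SameCycle a b) :
    transpositionLength (swap a b * σ) + 1 = transpositionLength σ := by
  have hcycles := numCycles_swap_mul hab h
  have hσ := transpositionLength_add_numCycles σ
  have hρ := transpositionLength_add_numCycles (swap a b * σ)
  omega

theorem transpositionLength_swap_mul_of_not_sameCycle (h : ¬σ.SameCycle a b) :
    transpositionLength (swap a b * σ) = transpositionLength σ + 1 := by
  have hab : a ≠ b := fun hab => h (hab ▸ .refl σ a)
  have hjoin := transpositionLength_swap_mul_add_one hab (sameCycle_swap_mul_of_not h)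
  rwa [swap_mul_self_mul, eq_comm] at hjoin

theorem transpositionLength_swap_mul_add_one_iff (hab : a ≠ b) :
    transpositionLength (swap a b * σ) + 1 = transpositionLength σ ↔ σ.SameCycle a b := by
  refine ⟨fun h => ?_, transpositionLength_swap_mul_add_one hab⟩
  by_contra hcycle
  have hlen := transpositionLength_swap_mul_of_not_sameCycle hcycle
  omega

theorem transpositionLength_isSwap_mul_le (hτ : τ.IsSwap) (σ : Perm α) :
    transpositionLength (τ * σ) ≤ transpositionLength σ + 1 := by
  obtain ⟨a, b, hab, rfl⟩ := hτ
  by_cases h : σ.SameCycle a b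
  · exact le_of_add_le_left ((transpositionLength_swap_mul_add_one hab h).le.trans
      (Nat.le_succ _))
  · exact (transpositionLength_swap_mul_of_not_sameCycle h).le

theorem transpositionLength_mul_le (σ τ : Perm α) :
    transpositionLength (σ * τ) ≤ transpositionLength σ + transpositionLength τ := by
  induction hk : transpositionLength σ using Nat.strong_induction_on generalizing σ with
  | _ k ih =>
    by_cases hσ : σ = 1
    · simp [hσ]
    · obtain ⟨a, ha⟩ : ∃ a, σ a ≠ a := by
        contrapose! hσ
        exact Perm.ext hσ
      have hcut := transpositionLength_swap_mul_add_one ha.symm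
        (sameCycle_apply_right.2 (.refl σ a))
      have hrest := ih _ (by omega) (swap a (σ a) * σ) rfl
      have hswap := transpositionLength_isSwap_mul_le ⟨a, σ a, ha.symm, rfl⟩
        (swap a (σ a) * σ * τ)
      rw [mul_assoc, swap_mul_self_mul, ← mul_assoc] at hswap
      omega

theorem transpositionLength_one : transpositionLength (1 : Perm α) = 0 := by
  have hcard : ∀ O ∈ (cyclePartition (1 : Perm α)).parts, #O = 1 := by
    intro O hO
    obtain ⟨x, rfl⟩ := mem_parts_cyclePartition.1 hO
    rw [part_cyclePartition_eq_image_of_pow_apply_eq one_pos (by simp), range_one,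
      image_singleton, card_singleton]
  rw [transpositionLength, numCycles, card_eq_sum_ones, ← sum_congr rfl hcard,
    Finpartition.sum_card_parts, card_univ, Nat.sub_self]

theorem transpositionLength_prod_le {l : List (Perm α)} (h : ∀ t ∈ l, t.IsSwap) :
    transpositionLength l.prod ≤ l.length := by
  induction l with
  | nil => simp [transpositionLength_one]
  | cons t l ih =>
    have hl := ih fun t ht => h t (List.mem_cons_of_mem _ ht)
    have ht := transpositionLength_isSwap_mul_le (h t List.mem_cons_self) l.prod
    rw [List.prod_cons, List.length_cons]
    omega

end TranspositionLength

theorem swap_apply_eq_of_isSwap {α : Type*} [DecidableEq α] {t : Equiv.Perm α} {a : α}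
    (ht : t.IsSwap) (ha : t a ≠ a) : Equiv.swap a (t a) = t := by
  obtain ⟨x, y, -, rfl⟩ := ht
  obtain ⟨-, rfl | rfl⟩ := Equiv.swap_apply_ne_self_iff.1 ha
  · rw [Equiv.swap_apply_left]
  · rw [Equiv.swap_apply_right, Equiv.swap_comm]

section GeodesicPrefixes

open Finset Equiv Equiv.Perm

variable {α : Type*} [Fintype α] [DecidableEq α] {σ t : Perm α} {a b : α} {k : ℕ}

/-- The `k`-tuples of transpositions that begin a minimal factorization of `σ`. -/
def geodesicPrefixes (σ : Perm α) (k : ℕ) : Set (Fin k → Perm α) :=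
  {τ | (∀ i, (τ i).IsSwap) ∧
    transpositionLength ((List.ofFn τ).prod⁻¹ * σ) + k = transpositionLength σ}

open Classical in
/-- The transpositions `t` that shorten `σ`, i.e. for which `t * σ` arises from `σ` by cutting a
cycle in two. -/
noncomputable def cuttingSwaps (σ : Perm α) : Finset (Perm α) :=
  {t | t.IsSwap ∧ transpositionLength (t * σ) + 1 = transpositionLength σ}

theorem mem_cuttingSwaps : t ∈ cuttingSwaps σ ↔
    t.IsSwap ∧ transpositionLength (t * σ) + 1 = transpositionLength σ := by
  simp [cuttingSwaps]

theorem swap_mem_cuttingSwaps : swap a b ∈ cuttingSwaps σ ↔ a ≠ b ∧ σ.SameCycle a b := by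
  rw [mem_cuttingSwaps, swap_isSwap_iff]
  exact and_congr_right transpositionLength_swap_mul_add_one_iff

theorem transpositionLength_prod_ofFn_le {τ : Fin k → Perm α} (hτ : ∀ i, (τ i).IsSwap) :
    transpositionLength (List.ofFn τ).prod ≤ k := by
  have h := transpositionLength_prod_le (List.forall_mem_ofFn_iff.2 hτ)
  rwa [List.length_ofFn] at h

theorem le_transpositionLength_prod_inv_mul_add {τ : Fin k → Perm α} (hτ : ∀ i, (τ i).IsSwap)
    (σ : Perm α) :
    transpositionLength σ ≤ transpositionLength ((List.ofFn τ).prod⁻¹ * σ) + k := by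
  have hmul := transpositionLength_mul_le (List.ofFn τ).prod ((List.ofFn τ).prod⁻¹ * σ)
  rw [mul_inv_cancel_left] at hmul
  have hprod := transpositionLength_prod_ofFn_le hτ
  omega

theorem cons_mem_geodesicPrefixes {τ : Fin k → Perm α} :
    (Fin.cons t τ : Fin (k + 1) → Perm α) ∈ geodesicPrefixes σ (k + 1) ↔
      t ∈ cuttingSwaps σ ∧ τ ∈ geodesicPrefixes (t * σ) k := by
  simp only [geodesicPrefixes, mem_cuttingSwaps, Set.mem_ofPred_eq, Fin.forall_fin_succ,
    Fin.cons_zero, Fin.cons_succ, List.ofFn_cons, List.prod_cons, mul_inv_rev, mul_assoc,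
    and_assoc]
  refine and_congr_right fun ht => ?_
  have htσ : t⁻¹ * σ = t * σ := by
    obtain ⟨a, b, -, rfl⟩ := ht
    rw [swap_inv]
  rw [htσ]
  constructor
  · rintro ⟨hτ, hlen⟩
    have hstep := transpositionLength_isSwap_mul_le ht (t⁻¹ * σ)
    rw [mul_inv_cancel_left, htσ] at hstep
    have hrest := le_transpositionLength_prod_inv_mul_add hτ (t * σ)
    exact ⟨by omega, hτ, by omega⟩
  · rintro ⟨hcut, hτ, hlen⟩
    exact ⟨hτ, by omega⟩

theorem ncard_geodesicPrefixes_succ (σ : Perm α) (k : ℕ) :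
    (geodesicPrefixes σ (k + 1)).ncard =
      ∑ t ∈ cuttingSwaps σ, (geodesicPrefixes (t * σ) k).ncard := by
  have e : geodesicPrefixes σ (k + 1) ≃
      Σ t : cuttingSwaps σ, geodesicPrefixes (t.1 * σ) k :=
    { toFun := fun τ =>
        have h := cons_mem_geodesicPrefixes.1 ((Fin.cons_self_tail τ.1).symm ▸ τ.2)
        ⟨⟨τ.1 0, h.1⟩, ⟨Fin.tail τ.1, h.2⟩⟩
      invFun := fun p => ⟨Fin.cons p.1.1 p.2.1, cons_mem_geodesicPrefixes.2 ⟨p.1.2, p.2.2⟩⟩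
      left_inv := fun τ => Subtype.ext (Fin.cons_self_tail τ.1)
      right_inv := fun p => rfl }
  rw [← Nat.card_coe_set_eq, Nat.card_congr e, Nat.card_sigma]
  simp only [Nat.card_coe_set_eq]
  exact sum_coe_sort _ fun t => (geodesicPrefixes (t * σ) k).ncard

theorem sum_cuttingSwaps_apply_ne {M : Type*} [AddCommMonoid M] (h : Perm α → M) (a : α) :
    ∑ t ∈ cuttingSwaps σ with t a ≠ a, h t =
      ∑ b ∈ ((cyclePartition σ).part a).erase a, h (swap a b) := by
  have heq : ∀ t ∈ ({t ∈ cuttingSwaps σ | t a ≠ a} : Finset (Perm α)), swap a (t a) = t := by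
    intro t ht
    rw [mem_filter, mem_cuttingSwaps] at ht
    exact swap_apply_eq_of_isSwap ht.1.1 ht.2
  have hmem {b : α} : b ∈ ((cyclePartition σ).part a).erase a ↔
      swap a b ∈ ({t ∈ cuttingSwaps σ | t a ≠ a} : Finset (Perm α)) := by
    rw [mem_erase, mem_part_cyclePartition, mem_filter, swap_mem_cuttingSwaps, swap_apply_left]
    tauto
  exact sum_nbij' (fun t => t a) (fun b => swap a b) (fun t ht => hmem.2 ((heq t ht).symm ▸ ht))
    (fun b hb => hmem.1 hb) heq (fun b _ => swap_apply_left a b) fun t ht => by rw [heq t ht]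

theorem two_nsmul_sum_cuttingSwaps {M : Type*} [AddCommMonoid M] (h : Perm α → M) :
    2 • ∑ t ∈ cuttingSwaps σ, h t =
      ∑ a, ∑ b ∈ ((cyclePartition σ).part a).erase a, h (swap a b) := by
  calc 2 • ∑ t ∈ cuttingSwaps σ, h t = ∑ t ∈ cuttingSwaps σ, ∑ _a ∈ t.support, h t := by
        rw [smul_sum]
        refine sum_congr rfl fun t ht => ?_
        rw [sum_const, card_support_eq_two.2 (mem_cuttingSwaps.1 ht).1]
    _ = ∑ a, ∑ t ∈ cuttingSwaps σ with t a ≠ a, h t :=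
        sum_comm' fun _ _ => by simp
    _ = ∑ a, ∑ b ∈ ((cyclePartition σ).part a).erase a, h (swap a b) :=
        sum_congr rfl fun a _ => sum_cuttingSwaps_apply_ne h a

end GeodesicPrefixes

section Counting

open Finset Equiv Equiv.Perm PowerSeries

variable {α : Type*} [Fintype α] [DecidableEq α] {σ : Perm α}

/-- The product over the cycles of `σ` of their generating functions: the exponential generating
function of `k ↦ #(geodesicPrefixes σ k)`. -/
noncomputable def permSeries (σ : Perm α) : ℚ⟦X⟧ :=
  ∏ O ∈ (cyclePartition σ).parts, cycleSeries #O

theorem constantCoeff_permSeries (σ : Perm α) : constantCoeff (permSeries σ) = 1 := by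
  rw [permSeries, map_prod]
  exact prod_eq_one fun O hO => constantCoeff_cycleSeries
    (card_ne_zero.2 ((cyclePartition σ).nonempty_of_mem_parts hO))

theorem sum_permSeries_swap_mul (σ : Perm α) (a : α) :
    ∑ b ∈ ((cyclePartition σ).part a).erase a, permSeries (swap a b * σ) =
      (∑ j ∈ Ico 1 #((cyclePartition σ).part a),
        cycleSeries j * cycleSeries (#((cyclePartition σ).part a) - j)) *
      ∏ O ∈ (cyclePartition σ).parts.erase ((cyclePartition σ).part a), cycleSeries #O := by
  have hbij := bijOn_pow_apply_part_erase σ a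
  rw [sum_mul, ← sum_nbij (fun j => (σ ^ j) a) hbij.mapsTo hbij.injOn hbij.surjOn fun j hj => ?_]
  have hj' := mem_Ico.1 hj
  have hb := mem_erase.1 (hbij.mapsTo hj)
  rw [permSeries, prod_parts_swap_mul _ hb.1.symm (mem_part_cyclePartition.1 hb.2),
    card_part_swap_mul_left hj'.1 hj'.2, card_part_swap_mul_right hj'.1 hj'.2, mul_assoc]

theorem derivative_permSeries (σ : Perm α) :
    derivative ℚ (permSeries σ) = ∑ t ∈ cuttingSwaps σ, permSeries (t * σ) := by
  have hdouble : 2 • derivative ℚ (permSeries σ) =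
      2 • ∑ t ∈ cuttingSwaps σ, permSeries (t * σ) := by
    calc 2 • derivative ℚ (permSeries σ)
      _ = ∑ O ∈ (cyclePartition σ).parts, #O • ((∑ j ∈ Ico 1 #O,
            cycleSeries j * cycleSeries (#O - j)) *
            ∏ Q ∈ (cyclePartition σ).parts.erase O, cycleSeries #Q) := by
          rw [permSeries, derivation_prod, smul_sum]
          refine sum_congr rfl fun O _ => ?_
          rw [← smul_mul_assoc, two_nsmul_derivative_cycleSeries, smul_mul_assoc]
      _ = ∑ a, ∑ b ∈ ((cyclePartition σ).part a).erase a, permSeries (swap a b * σ) := by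
          rw [← sum_part_eq_sum_card_nsmul]
          exact sum_congr rfl fun a _ => (sum_permSeries_swap_mul σ a).symm
      _ = 2 • ∑ t ∈ cuttingSwaps σ, permSeries (t * σ) :=
          (two_nsmul_sum_cuttingSwaps fun t => permSeries (t * σ)).symm
  rw [← Nat.cast_smul_eq_nsmul ℚ, ← Nat.cast_smul_eq_nsmul ℚ] at hdouble
  exact smul_right_injective _ (Nat.cast_ne_zero.2 two_ne_zero) hdouble

theorem ncard_geodesicPrefixes (σ : Perm α) (k : ℕ) :
    ((geodesicPrefixes σ k).ncard : ℚ) = k.factorial * coeff k (permSeries σ) := by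
  induction k generalizing σ with
  | zero =>
    have huniv : geodesicPrefixes σ 0 = Set.univ := by
      ext τ
      simp [geodesicPrefixes]
    simp [huniv, constantCoeff_permSeries]
  | succ k ih =>
    have hcoeff : coeff (k + 1) (permSeries σ) * (k + 1) =
        ∑ t ∈ cuttingSwaps σ, coeff k (permSeries (t * σ)) := by
      rw [← coeff_derivative, derivative_permSeries, map_sum]
    rw [ncard_geodesicPrefixes_succ, Nat.cast_sum, sum_congr rfl fun t _ => ih (t * σ),
      ← mul_sum, ← hcoeff, Nat.factorial_succ]
    push_cast
    ring

theorem permSeries_of_isCycleOn_univ [Nonempty α] (hσ : σ.IsCycleOn Set.univ) :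
    permSeries σ = cycleSeries (Fintype.card α) := by
  have hpart (x : α) : (cyclePartition σ).part x = univ :=
    eq_univ_of_forall fun y => mem_part_cyclePartition.2 (hσ.2 trivial trivial)
  have hparts : (cyclePartition σ).parts = {univ} := by
    ext O
    simp [mem_parts_cyclePartition, hpart, eq_comm]
  rw [permSeries, hparts, prod_singleton, card_univ]

theorem ncard_geodesicPrefixes_of_isCycleOn_univ [Nonempty α] (hσ : σ.IsCycleOn Set.univ)
    (k : ℕ) : (geodesicPrefixes σ (k + 1)).ncard =
      Fintype.card α ^ k * (Fintype.card α).choose (k + 2) := by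
  have h := ncard_geodesicPrefixes σ (k + 1)
  rw [permSeries_of_isCycleOn_univ hσ, factorial_mul_coeff_succ_cycleSeries] at h
  exact_mod_cast h

end Counting

section FinRotate

open Finset Equiv Equiv.Perm

variable {n : ℕ}

theorem cycleCount_eq_numCycles (σ : Perm (Fin n)) : cycleCount σ = numCycles σ := by
  rw [cycleCount, numCycles, ← Set.ncard_coe_finset]
  refine Set.BijOn.ncard_eq (f := (cyclePartition σ).part) ⟨?_, ?_, ?_⟩
  · exact fun x _ => mem_parts_cyclePartition.2 ⟨x, rfl⟩
  · intro x hx y hy hxy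
    rw [part_cyclePartition_eq_iff] at hxy
    exact le_antisymm (hx y hxy) (hy x hxy.symm)
  · intro O hO
    have hne := (cyclePartition σ).nonempty_of_mem_parts hO
    have hpart := (cyclePartition σ).part_eq_of_mem hO (O.min'_mem hne)
    refine ⟨O.min' hne, fun y hy => O.min'_le y ?_, hpart⟩
    exact hpart ▸ mem_part_cyclePartition.2 hy

theorem normPerm_eq_transpositionLength (σ : Perm (Fin n)) :
    normPerm σ = transpositionLength σ := by
  rw [normPerm, transpositionLength, cycleCount_eq_numCycles, Fintype.card_fin]

theorem sigmaSet_eq_geodesicPrefixes (n k : ℕ) :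
    SigmaSet n k = geodesicPrefixes (finRotate n) k := by
  ext τ
  simp only [SigmaSet, geodesicPrefixes, precLe, normPerm_eq_transpositionLength,
    Set.mem_ofPred_eq]
  refine and_congr_right fun hτ => ?_
  have hprod := transpositionLength_prod_ofFn_le hτ
  have hle := transpositionLength_mul_le (List.ofFn τ).prod ((List.ofFn τ).prod⁻¹ * finRotate n)
  rw [mul_inv_cancel_left] at hle
  omega

theorem isCycleOn_finRotate (n : ℕ) : (finRotate n).IsCycleOn Set.univ := by
  rcases Nat.lt_or_ge n 2 with hn | hn
  · have : Subsingleton (Fin n) := Fin.subsingleton_iff_le_one.2 (by omega)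
    exact isCycleOn_of_subsingleton _ _
  · have h := (isCycle_finRotate_of_le hn).isCycleOn
    rwa [← coe_support_eq_set_support, support_finRotate_of_le hn, coe_univ] at h

end FinRotate

/-- For every n ≥ 1 and k ≥ 1, Σ_n(k) is finite with cardinality n^{k−1}·C(n,k+1). -/
theorem stmt0 (n k : ℕ) (hn : 1 ≤ n) (hk : 1 ≤ k) :
    (SigmaSet n k).Finite ∧
      (SigmaSet n k).ncard = n ^ (k - 1) * Nat.choose n (k + 1) := by
  refine ⟨Set.toFinite _, ?_⟩
  have : NeZero n := ⟨Nat.one_le_iff_ne_zero.1 hn⟩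
  obtain ⟨k, rfl⟩ := Nat.exists_eq_add_of_le' hk
  rw [sigmaSet_eq_geodesicPrefixes,
    ncard_geodesicPrefixes_of_isCycleOn_univ (isCycleOn_finRotate n), Fintype.card_fin,
    Nat.add_sub_cancel]
end

section
/- Let ((i₁ j₁),…,(i_k j_k)) ∈ T_n^k be a tuple of transpositions (with i_l < j_l for each l) such that i₁ ≤ ⋯ ≤ i_k. Then the following are equivalent: (1) ((i₁ j₁),…,(i_k j_k)) ∈ Σ_n(k); (2) for all l, m ∈ {1,…,k} with l < m, either j_l ≤ i_m or j_l > j_m. -/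
/-!
Write `γ` for the product of the first few transpositions and `c = (1 … n)`. The tuple lies in
`Σ_n(k)` iff each further factor `(i j)` lowers the norm of `γ⁻¹c`, that is, iff `i` and `j` lie on
a common cycle of `γ⁻¹c`. Each cycle of `γ⁻¹c` runs through its elements in increasing order and
then returns to the smallest one; multiplying by `(i j)` cuts the elements of `[i, j)` out of the
cycle containing them. As the `i_l` increase, no cycle has gaps above the current `i`, so what is
cut out is the whole interval `[i, j)`. Hence `i_m` and `j_m` share a cycle at step `m` iff none of
the earlier intervals `[i_l, j_l)` separates them, and since `i_l ≤ i_m < j_m` this says `j_l ≤ i_m`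
or `j_m < j_l`.
-/

open Equiv Equiv.Perm

section Setoid

variable {α : Type*} {r s : Setoid α} {a b : α}

open Classical in
/-- The finest equivalence relation containing `r` and relating `a` to `b`, encoded as the kernel
of the projection to `Quotient r` followed by the map that redirects the class of `b` to that
of `a`. -/
noncomputable def joinClasses (r : Setoid α) (a b : α) : Setoid α :=
  Setoid.ker (Function.update id (Quotient.mk r b) (Quotient.mk r a) ∘ Quotient.mk r)

theorem joinClasses_le_iff : joinClasses r a b ≤ s ↔ r ≤ s ∧ s a b := by
  classical
  constructor
  · intro h
    refine ⟨fun x y hxy => h ?_, h ?_⟩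
    · exact congrArg (Function.update id _ _) (Quotient.sound hxy)
    · change Function.update id (Quotient.mk r b) (Quotient.mk r a) (Quotient.mk r a) =
        Function.update id (Quotient.mk r b) (Quotient.mk r a) (Quotient.mk r b)
      simp [Function.update_apply]
  · rintro ⟨hrs, hab⟩ x y hxy
    have mk_update (x : α) : Setoid.map_of_le hrs
        (Function.update id (Quotient.mk r b) (Quotient.mk r a) (Quotient.mk r x)) =
          Quotient.mk s x := by
      by_cases hx : Quotient.mk r x = Quotient.mk r b
      · rw [hx, Function.update_self]
        exact Quotient.sound (s.trans' hab (s.symm' (hrs (Quotient.exact hx))))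
      · rw [Function.update_of_ne hx]
        rfl
    apply Quotient.exact (s := s)
    rw [← mk_update x, ← mk_update y]
    exact congrArg _ hxy

theorem joinClasses_eq_self (hab : r a b) : joinClasses r a b = r :=
  le_antisymm (joinClasses_le_iff.2 ⟨le_rfl, hab⟩) (joinClasses_le_iff.1 le_rfl).1

theorem card_quotient_joinClasses_add_one [Finite α] (hab : ¬ r a b) :
    Nat.card (Quotient (joinClasses r a b)) + 1 = Nat.card (Quotient r) := by
  classical
  have hne : Quotient.mk r a ≠ Quotient.mk r b := fun h => hab (Quotient.exact h)
  have hrange : Set.range (Function.update id (Quotient.mk r b) (Quotient.mk r a) ∘ Quotient.mk r) =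
      {Quotient.mk r b}ᶜ := by
    rw [Quotient.mk_surjective.range_comp]
    ext q
    simp only [Set.mem_range, Function.update_apply, Set.mem_compl_singleton_iff]
    refine ⟨?_, fun hq => ⟨q, if_neg hq⟩⟩
    rintro ⟨y, rfl⟩
    split_ifs with hy
    exacts [hne, hy]
  rw [joinClasses, Nat.card_congr (Setoid.quotientKerEquivRange _), hrange, Nat.card_coe_set_eq,
    add_comm, ← Set.ncard_singleton (Quotient.mk r b), Set.ncard_add_ncard_compl]

end Setoid

section SameCycle

variable {α : Type*} {π : Perm α} {a b : α}

theorem sameCycle_setoid_le_iff {s : Setoid α} : SameCycle.setoid π ≤ s ↔ ∀ x, s x (π x) := by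
  refine ⟨fun h x => h (sameCycle_apply_right.2 (SameCycle.refl π x)), ?_⟩
  rintro h x _ ⟨m, rfl⟩
  induction m using Int.induction_on with
  | zero => exact s.refl' x
  | succ m ih =>
    rw [add_comm, zpow_one_add, Perm.mul_apply]
    exact s.trans' ih (h _)
  | pred m ih =>
    refine s.trans' ih (s.symm' ?_)
    have hm := h ((π ^ (-(m : ℤ) - 1)) x)
    rwa [← Perm.mul_apply, ← zpow_one_add, add_sub_cancel] at hm

variable [DecidableEq α]

theorem rel_swap_apply_iff {s : Setoid α} (hab : s a b) (x y : α) :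
    s x (swap a b y) ↔ s x y := by
  have hy : s y (swap a b y) := by
    rcases eq_or_ne y a with rfl | hya
    · simpa using hab
    rcases eq_or_ne y b with rfl | hyb
    · simpa using s.symm' hab
    rw [swap_apply_of_ne_of_ne hya hyb]
  exact ⟨fun h => s.trans' h (s.symm' hy), fun h => s.trans' h hy⟩

theorem joinClasses_sameCycle_swap_mul (π : Perm α) (a b : α) :
    joinClasses (SameCycle.setoid (swap a b * π)) a b = joinClasses (SameCycle.setoid π) a b := by
  refine eq_of_forall_ge_iff fun s => ?_
  simp only [joinClasses_le_iff, sameCycle_setoid_le_iff, Perm.mul_apply]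
  exact and_congr_left fun hab => forall_congr' fun x => rel_swap_apply_iff hab x (π x)

variable [Finite α]

theorem sameCycle_swap_mul_of_not_sameCycle (h : ¬ π.SameCycle a b) :
    (swap a b * π).SameCycle a b := by
  have pow_mem (m : ℕ) : (swap a b * π).SameCycle a ((π ^ m) a) := by
    induction m with
    | zero => simp [SameCycle.refl]
    | succ m ih =>
      rw [pow_succ', Perm.mul_apply]
      by_cases hma : π ((π ^ m) a) = a
      · rw [hma]
      have hmb : π ((π ^ m) a) ≠ b := by
        intro hmb
        rw [← hmb] at h
        simp [SameCycle.refl] at h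
      simpa [swap_apply_of_ne_of_ne hma hmb] using sameCycle_apply_right.2 ih
  obtain ⟨m, hm⟩ := ((sameCycle_symm_apply_right (f := π)).2 (SameCycle.refl π a)).exists_nat_pow_eq
  simpa [hm] using sameCycle_apply_right.2 (pow_mem m)

-- If `a` and `b` shared a cycle under both permutations, these two cycles would have the same
-- support, hence the same sign; but they differ by the transposition `swap a b`.
theorem not_sameCycle_swap_mul_of_sameCycle (hab : a ≠ b) (h : π.SameCycle a b) :
    ¬ (swap a b * π).SameCycle a b := by
  classical
  have := Fintype.ofFinite α
  intro h'
  have hsetoid : SameCycle.setoid (swap a b * π) = SameCycle.setoid π := by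
    rw [← joinClasses_eq_self (r := SameCycle.setoid (swap a b * π)) h',
      joinClasses_sameCycle_swap_mul, joinClasses_eq_self (r := SameCycle.setoid π) h]
  have hsame (x : α) : (swap a b * π).SameCycle a x ↔ π.SameCycle a x :=
    iff_of_eq (congrArg (fun s : Setoid α => s a x) hsetoid)
  have hcycle : cycleOf (swap a b * π) a = swap a b * cycleOf π a := by
    ext x
    by_cases hx : π.SameCycle a x
    · simp [hx.cycleOf_apply, ((hsame x).2 hx).cycleOf_apply]
    · have hxa : x ≠ a := fun e => hx (e ▸ SameCycle.refl π x)
      have hxb : x ≠ b := fun e => hx (e ▸ h)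
      simp [cycleOf_apply_of_not_sameCycle hx, cycleOf_apply_of_not_sameCycle (mt (hsame x).1 hx),
        swap_apply_of_ne_of_ne hxa hxb]
  have hπa : π a ≠ a := fun e => hab (h.eq_of_left e)
  have hπa' : (swap a b * π) a ≠ a := fun e => hab (h'.eq_of_left e)
  have hsupport : (cycleOf (swap a b * π) a).support = (cycleOf π a).support := by
    ext x
    rw [mem_support_cycleOf_iff' hπa', mem_support_cycleOf_iff' hπa, hsame]
  have hsign : sign (cycleOf (swap a b * π) a) = sign (cycleOf π a) := by
    rw [(isCycle_cycleOf _ hπa').sign, (isCycle_cycleOf _ hπa).sign, hsupport]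
  rw [hcycle, Perm.sign_mul, sign_swap hab, neg_one_mul] at hsign
  exact units_ne_neg_self _ hsign.symm

theorem card_quotient_sameCycle_swap_mul (hab : a ≠ b) (h : π.SameCycle a b) :
    Nat.card (Quotient (SameCycle.setoid (swap a b * π))) =
      Nat.card (Quotient (SameCycle.setoid π)) + 1 := by
  rw [← card_quotient_joinClasses_add_one (r := SameCycle.setoid (swap a b * π))
    (not_sameCycle_swap_mul_of_sameCycle hab h), joinClasses_sameCycle_swap_mul,
    joinClasses_eq_self (r := SameCycle.setoid π) h]

end SameCycle

section Norm

variable {n k : ℕ} {a b : Fin n}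

theorem cycleCount_eq_card_quotient (σ : Perm (Fin n)) :
    cycleCount σ = Nat.card (Quotient (SameCycle.setoid σ)) := by
  rw [cycleCount, ← Nat.card_coe_set_eq]
  refine Nat.card_congr (Equiv.ofBijective (fun x => Quotient.mk _ x.1) ⟨?_, ?_⟩)
  · rintro ⟨x, hx⟩ ⟨y, hy⟩ hxy
    have hxy : σ.SameCycle x y := Quotient.exact hxy
    exact Subtype.ext (le_antisymm (hx y hxy) (hy x hxy.symm))
  · rintro ⟨x⟩
    obtain ⟨m, hxm, hmin⟩ := Set.exists_min_image {y | σ.SameCycle x y} id (Set.toFinite _)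
      ⟨x, SameCycle.refl σ x⟩
    exact ⟨⟨m, fun y hy => hmin y (hxm.trans hy)⟩, Quotient.sound hxm.symm⟩

theorem cycleCount_le (σ : Perm (Fin n)) : cycleCount σ ≤ n :=
  (Set.ncard_le_card _).trans_eq (Nat.card_fin n)

theorem normPerm_one : normPerm (1 : Perm (Fin n)) = 0 := by
  simp +contextual [normPerm, cycleCount]

theorem normPerm_swap_mul_add_one {σ : Perm (Fin n)} (hab : a ≠ b) (h : σ.SameCycle a b) :
    normPerm (swap a b * σ) + 1 = normPerm σ := by
  have hcount : cycleCount (swap a b * σ) = cycleCount σ + 1 := by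
    simpa only [cycleCount_eq_card_quotient] using card_quotient_sameCycle_swap_mul hab h
  have hle := cycleCount_le (swap a b * σ)
  unfold normPerm
  lia

theorem normPerm_swap_mul_of_not_sameCycle {σ : Perm (Fin n)} (h : ¬ σ.SameCycle a b) :
    normPerm (swap a b * σ) = normPerm σ + 1 := by
  have hab : a ≠ b := fun e => h (e ▸ SameCycle.refl σ a)
  simpa using (normPerm_swap_mul_add_one hab (sameCycle_swap_mul_of_not_sameCycle h)).symm

theorem normPerm_swap_mul_le (σ : Perm (Fin n)) (a b : Fin n) :
    normPerm (swap a b * σ) ≤ normPerm σ + 1 := by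
  rcases eq_or_ne a b with rfl | hab
  · rw [swap_self, ← Perm.one_def, one_mul]
    exact Nat.le_succ _
  by_cases h : σ.SameCycle a b
  · have hstep := normPerm_swap_mul_add_one hab h
    lia
  · exact (normPerm_swap_mul_of_not_sameCycle h).le

theorem normPerm_mul_le (σ ρ : Perm (Fin n)) : normPerm (σ * ρ) ≤ normPerm σ + normPerm ρ := by
  induction hN : normPerm σ using Nat.strong_induction_on generalizing σ with
  | _ N ih =>
    by_cases hσ : σ = 1
    · simp [hσ]
    obtain ⟨a, ha⟩ : ∃ a, a ≠ σ a := by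
      simpa [Equiv.ext_iff, eq_comm] using hσ
    have hstep := normPerm_swap_mul_add_one ha (sameCycle_apply_right.2 (SameCycle.refl σ a))
    calc normPerm (σ * ρ) = normPerm (swap a (σ a) * (swap a (σ a) * σ * ρ)) := by
          rw [mul_assoc, swap_mul_self_mul]
      _ ≤ normPerm (swap a (σ a) * σ * ρ) + 1 := normPerm_swap_mul_le _ _ _
      _ ≤ normPerm (swap a (σ a) * σ) + normPerm ρ + 1 := by
          gcongr
          exact ih _ (by lia) _ rfl
      _ = N + normPerm ρ := by lia

theorem normPerm_le_add_normPerm_inv_mul (σ ρ : Perm (Fin n)) :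
    normPerm ρ ≤ normPerm σ + normPerm (σ⁻¹ * ρ) := by
  simpa only [mul_inv_cancel_left] using normPerm_mul_le σ (σ⁻¹ * ρ)

theorem normPerm_list_prod_le {l : List (Perm (Fin n))} (hl : ∀ τ ∈ l, τ.IsSwap) :
    normPerm l.prod ≤ l.length := by
  induction l with
  | nil => simp [normPerm_one]
  | cons τ l ih =>
    obtain ⟨⟨a, b, -, rfl⟩, hl'⟩ := List.forall_mem_cons.1 hl
    rw [List.prod_cons, List.length_cons]
    exact (normPerm_swap_mul_le _ _ _).trans (Nat.succ_le_succ (ih hl'))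

theorem normPerm_le_length_add {l : List (Perm (Fin n))} (hl : ∀ τ ∈ l, τ.IsSwap)
    (σ : Perm (Fin n)) : normPerm σ ≤ l.length + normPerm (l.prod⁻¹ * σ) :=
  (normPerm_le_add_normPerm_inv_mul l.prod σ).trans
    (Nat.add_le_add_right (normPerm_list_prod_le hl) _)

/-- The partial products of the list of transpositions `l` are the start of a geodesic from `1` to
`σ` in the Cayley graph of the symmetric group generated by the transpositions. -/
def IsInitialGeodesic (l : List (Perm (Fin n))) (σ : Perm (Fin n)) : Prop :=
  normPerm σ = l.length + normPerm (l.prod⁻¹ * σ)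

theorem isInitialGeodesic_nil (σ : Perm (Fin n)) : IsInitialGeodesic [] σ := by
  simp [IsInitialGeodesic]

theorem isInitialGeodesic_swap_cons_iff {l : List (Perm (Fin n))} {σ : Perm (Fin n)}
    (hab : a ≠ b) (hl : ∀ τ ∈ l, τ.IsSwap) :
    IsInitialGeodesic (swap a b :: l) σ ↔
      σ.SameCycle a b ∧ IsInitialGeodesic l (swap a b * σ) := by
  have hle := normPerm_le_length_add hl (swap a b * σ)
  simp only [IsInitialGeodesic, List.length_cons, List.prod_cons, mul_inv_rev, swap_inv, mul_assoc]
  by_cases h : σ.SameCycle a b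
  · have hstep := normPerm_swap_mul_add_one hab h
    simp only [h, true_and]
    lia
  · have hstep := normPerm_swap_mul_of_not_sameCycle h
    simp only [h, false_and, iff_false]
    lia

theorem mem_sigmaSet_iff_isInitialGeodesic {τ : Fin k → Perm (Fin n)} (hτ : ∀ l, (τ l).IsSwap) :
    τ ∈ SigmaSet n k ↔ IsInitialGeodesic (List.ofFn τ) (finRotate n) := by
  have hnorm : normPerm (List.ofFn τ).prod ≤ k := by
    simpa using normPerm_list_prod_le (l := List.ofFn τ) (by simpa [List.forall_mem_ofFn_iff])
  have htriangle := normPerm_le_add_normPerm_inv_mul (List.ofFn τ).prod (finRotate n)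
  simp only [SigmaSet, precLe, IsInitialGeodesic, Set.mem_ofPred_eq, hτ, implies_true, true_and,
    List.length_ofFn]
  lia

end Norm

section CyclicSucc

variable {α : Type*} [LinearOrder α] {r : Setoid α} {π : Perm α} {a b : α}

/-- `π` moves every element to the next larger element of its `r`-class, and the largest element
of a class to the smallest one. -/
def IsCyclicSucc (r : Setoid α) (π : Perm α) : Prop :=
  ∀ x, IsLeast {y | r x y ∧ x < y} (π x) ∨
    IsGreatest {y | r x y} x ∧ IsLeast {y | r x y} (π x)

theorem isCyclicSucc_top_finRotate (n : ℕ) : IsCyclicSucc ⊤ (finRotate n) := by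
  cases n with
  | zero => exact fun x => x.elim0
  | succ n =>
    intro x
    induction x using Fin.lastCases with
    | last =>
      right
      simp [IsGreatest, IsLeast, upperBounds, lowerBounds, Fin.le_last, Setoid.top_def]
    | cast x =>
      left
      simp [IsLeast, lowerBounds, Fin.castSucc_lt_iff_succ_le, Setoid.top_def]

theorem IsCyclicSucc.rel_apply (h : IsCyclicSucc r π) (x : α) : r x (π x) :=
  (h x).elim (fun hx => hx.1.1) fun hx => hx.2.1

theorem IsCyclicSucc.sameCycle_iff [WellFoundedGT α] (h : IsCyclicSucc r π) {x y : α} :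
    π.SameCycle x y ↔ r x y := by
  refine ⟨fun hxy => sameCycle_setoid_le_iff.2 h.rel_apply hxy, ?_⟩
  have climb (x y : α) (hxy : r x y) (hle : x ≤ y) : π.SameCycle x y := by
    induction x using WellFoundedGT.induction with
    | _ x ih =>
      rcases hle.eq_or_lt with rfl | hlt
      · rfl
      rcases h x with hx | ⟨hx, -⟩
      · exact sameCycle_apply_left.1 <|
          ih (π x) hx.1.2 (r.trans' (r.symm' hx.1.1) hxy) (hx.2 ⟨hxy, hlt⟩)
      · exact absurd (hx.2 hxy) hlt.not_ge
  intro hxy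
  rcases le_total x y with hle | hle
  · exact climb x y hxy hle
  · exact (climb y x (r.symm' hxy) hle).symm

/-- Above `a`, the equivalence classes of `r` have no gaps. -/
def ConvexAbove (r : Setoid α) (a : α) : Prop :=
  ∀ ⦃x y z⦄, a ≤ x → x ≤ y → y ≤ z → r x z → r x y

/-- The refinement of `r` that separates the elements of `[a, b)` from all others. -/
def cutIco (r : Setoid α) (a b : α) : Setoid α :=
  r ⊓ Setoid.ker (· ∈ Set.Ico a b)

theorem cutIco_apply {x y : α} :
    cutIco r a b x y ↔ r x y ∧ (x ∈ Set.Ico a b ↔ y ∈ Set.Ico a b) := by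
  rw [cutIco, Setoid.inf_iff_and, Setoid.ker_def, eq_iff_iff]

theorem cutIco_apply_of_le {x y : α} (hax : a ≤ x) (hxy : x < y) :
    cutIco r a b x y ↔ r x y ∧ (b ≤ x ∨ y < b) := by
  rw [cutIco_apply, Set.mem_Ico, Set.mem_Ico]
  grind

theorem ConvexAbove.cutIco {c : α} (h : ConvexAbove r c) (hac : a ≤ c) :
    ConvexAbove (cutIco r a b) c := by
  intro x y z hcx hxy hyz hxz
  simp only [cutIco_apply, Set.mem_Ico] at hxz ⊢
  refine ⟨h hcx hxy hyz hxz.1, ?_⟩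
  grind

-- By convexity `[a, b)` lies in the class of `a`, so `π` runs through it on its way from `a` to
-- `b`. Multiplying by `swap a b` sends the predecessor of `b` back to `a`, which closes `[a, b)` to
-- a cycle, and sends the predecessor of `a` to `b`.
theorem IsCyclicSucc.swap_mul (h : IsCyclicSucc r π) (hab : a < b) (hr : r a b)
    (hconv : ConvexAbove r a) : IsCyclicSucc (cutIco r a b) (swap a b * π) := by
  intro x
  have hIco {y : α} (hay : a ≤ y) (hyb : y < b) : r x y ↔ r x a :=
    have hya : r a y := hconv le_rfl hay hyb.le hr
    ⟨fun h => r.trans' h (r.symm' hya), fun h => r.trans' h hya⟩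
  have hiff : r x a ↔ r x b :=
    ⟨fun h => r.trans' h hr, fun h => r.trans' h (r.symm' hr)⟩
  have hrefl := r.refl' x
  specialize h x
  simp only [IsLeast, IsGreatest, mem_lowerBounds, mem_upperBounds, Set.mem_ofPred_eq,
    cutIco_apply, Set.mem_Ico, Perm.mul_apply] at h ⊢
  rcases h with ⟨⟨hrel, hlt⟩, hnext⟩ | ⟨⟨-, hlast⟩, hrel, hfirst⟩
  · rcases eq_or_ne (π x) a with hxa | hxa
    · left
      rw [hxa, swap_apply_left]
      grind
    rcases eq_or_ne (π x) b with hxb | hxb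
    · right
      have hax : a ≤ x := by
        by_contra! hxa
        exact (hnext a ⟨hiff.2 (hxb ▸ hrel), hxa⟩).not_gt (hxb ▸ hab)
      rw [hxb, swap_apply_right]
      grind
    · left
      have hside : a ≤ x ∧ x < b ↔ a ≤ π x ∧ π x < b := by grind
      rw [swap_apply_of_ne_of_ne hxa hxb]
      grind
  · right
    rcases eq_or_ne (π x) a with hxa | hxa
    · rw [hxa, swap_apply_left]
      grind
    have hπx : ¬ (a ≤ π x ∧ π x < b) := fun ⟨hax, hxb⟩ =>
      hxa (le_antisymm (hfirst a ((hIco hax hxb).1 hrel)) hax)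
    have hxb : π x ≠ b := fun hxb => (hfirst a (hiff.2 (hxb ▸ hrel))).not_gt (hxb ▸ hab)
    rw [swap_apply_of_ne_of_ne hxa hxb]
    grind

theorem isInitialGeodesic_map_swap_iff {n : ℕ} {l : List (Fin n × Fin n)} {r : Setoid (Fin n)}
    {σ : Perm (Fin n)} (hσ : IsCyclicSucc r σ) (hlt : ∀ p ∈ l, p.1 < p.2)
    (hsorted : l.Pairwise (fun p q => p.1 ≤ q.1)) (hconv : ∀ p ∈ l, ConvexAbove r p.1) :
    IsInitialGeodesic (l.map fun p => swap p.1 p.2) σ ↔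
      (∀ p ∈ l, r p.1 p.2) ∧ l.Pairwise (fun p q => p.2 ≤ q.1 ∨ q.2 < p.2) := by
  induction l generalizing r σ with
  | nil => simp [isInitialGeodesic_nil]
  | cons p l ih =>
    obtain ⟨hp, hlt⟩ := List.forall_mem_cons.1 hlt
    obtain ⟨hle, hsorted⟩ := List.pairwise_cons.1 hsorted
    obtain ⟨hconvp, hconv⟩ := List.forall_mem_cons.1 hconv
    have hswap : ∀ τ ∈ l.map fun q => swap q.1 q.2, τ.IsSwap :=
      List.forall_mem_map.2 fun q hq => ⟨q.1, q.2, (hlt q hq).ne, rfl⟩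
    rw [List.map_cons, isInitialGeodesic_swap_cons_iff hp.ne hswap, hσ.sameCycle_iff,
      List.forall_mem_cons, List.pairwise_cons, and_assoc]
    refine and_congr_right fun hr => ?_
    rw [ih (hσ.swap_mul hp hr hconvp) hlt hsorted fun q hq => (hconv q hq).cutIco (hle q hq),
      ← and_assoc, ← forall₂_and]
    refine and_congr_left' (forall₂_congr fun q hq => ?_)
    exact cutIco_apply_of_le (hle q hq) (hlt q hq)

end CyclicSucc

/-- For a tuple of transpositions ((i₁ j₁),…,(i_k j_k)) with i₁ ≤ ⋯ ≤ i_k, membership in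
Σ_n(k) is equivalent to: for all l < m, either j_l ≤ i_m or j_l > j_m. -/
theorem stmt14 (n k : ℕ) (i j : Fin k → Fin n) (hij : ∀ l, i l < j l)
    (hmono : Monotone i) :
    ((fun l => Equiv.swap (i l) (j l)) ∈ SigmaSet n k) ↔
      ∀ l m : Fin k, l < m → (j l ≤ i m ∨ j m < j l) := by
  let p (l : Fin k) : Fin n × Fin n := (i l, j l)
  have hswaps : List.ofFn (fun l => swap (i l) (j l)) =
      (List.ofFn p).map fun q => swap q.1 q.2 := by
    rw [List.map_ofFn]
    rfl
  rw [mem_sigmaSet_iff_isInitialGeodesic fun l => ⟨i l, j l, (hij l).ne, rfl⟩, hswaps,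
    isInitialGeodesic_map_swap_iff (isCyclicSucc_top_finRotate n)
      (List.forall_mem_ofFn_iff.2 hij) (List.pairwise_ofFn.2 fun _ _ h => hmono h.le)
      fun _ _ _ _ _ _ _ _ _ => trivial, List.pairwise_ofFn]
  exact and_iff_right fun _ _ => trivial
end

section
/- There exists a group action • of the symmetric group S_k on the set Σ_n(k) such that: (1) for every Coxeter generator σ_l = (l, l+1) with l ∈ {1,…,k−1} and every γ ∈ Σ_n(k), σ_l • γ = s_l(γ); (2) the map P is equivariant: for every π ∈ S_k and γ ∈ Σ_n(k), P(π • γ) = π · P(γ); (3) P preserves stabilisers: for every π ∈ S_k and γ ∈ Σ_n(k), π • γ = γ if and only if π · P(γ) = P(γ). -/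
/-- The intrinsic form of the operation s_l at consecutive positions a, b = a+1 of a chain of
transpositions: for a transposition written (i j) with i < j, the smaller entry i is the
minimum of its support, so the case distinction on i_a vs i_b is made by comparing the
minima of the supports. -/
def slGen {n k : ℕ} (γ : Fin k → Equiv.Perm (Fin n)) (a b : Fin k) :
    Fin k → Equiv.Perm (Fin n) :=
  fun m =>
    if (γ a).support.min = (γ b).support.min then γ m
    else if (γ a).support.min < (γ b).support.min then
      if m = a then γ b else if m = b then γ b * γ a * γ b else γ m
    else
      if m = a then γ a * γ b * γ a else if m = b then γ a else γ m

/-- P : Σ_n(k) → {1,…,n}^k, sending ((i₁ j₁),…,(i_k j_k)) to (i₁,…,i_k); for a transposition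
(i j) with i < j, i is the minimum of the support. -/
def Pmap {n k : ℕ} (γ : Fin k → Equiv.Perm (Fin n)) : Fin k → WithBot (Fin n) :=
  fun m => (γ m).support.min

/-!
Every move `s_l` preserves the product of the tuple, is injective, and permutes the smaller entries.
Hence each `π ∈ S_k` has a lift to an injective self-map of `Σ_n(k)` which preserves the product and
over which `P` is equivariant.  The whole theorem follows once `γ ∈ Σ_n(k)` is known to be
determined by its product `w` and by `P(γ)`: lifts are then unique, so they compose as in `S_k`.

By injectivity of the lifts it suffices to treat tuples sorted by their smaller entries.  Since
`w ≼ c`, every cycle of `w` is increasing, and multiplying by the last transposition `(i j)` cuts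
the points of `(i, j]` out of a cycle of `w`.  As all the other transpositions have smaller entry
at most `i`, none of them moves `j`; so `j = w(i)`, and the tuple can be read off from its end.
-/

namespace HurwitzAction

open Equiv Equiv.Perm

section SameCycle

variable {α : Type*} [Finite α]

theorem sameCycle_induction {w : Perm α} {p : α → Prop} (hp : ∀ x, p x → p (w x)) {x y : α}
    (hxy : w.SameCycle x y) (hx : p x) : p y := by
  obtain ⟨m, rfl⟩ := hxy.exists_nat_pow_eq
  rw [coe_pow]
  exact Function.Iterate.rec p hx hp m

theorem eq_of_sameCycle {β : Type*} {w : Perm α} {f : α → β} (hf : ∀ x, f (w x) = f x) {x y : α}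
    (hxy : w.SameCycle x y) : f x = f y :=
  sameCycle_induction (p := fun z => f x = f z) (fun z hz => hz.trans (hf z).symm) hxy rfl

variable [DecidableEq α] {w : Perm α} {i j : α}

theorem sameCycle_of_sameCycle_mul_swap (hij : w.SameCycle i j) {x y : α}
    (hxy : (w * swap i j).SameCycle x y) : w.SameCycle x y := by
  refine sameCycle_induction (p := w.SameCycle x) (fun z hz => ?_) hxy .rfl
  rw [Perm.mul_apply, sameCycle_apply_right, swap_apply_def]
  split_ifs with hi hj
  · exact (hi ▸ hz).trans hij
  · exact (hj ▸ hz).trans hij.symm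
  · exact hz

theorem sameCycle_mul_swap_of_not_sameCycle (hij : ¬ w.SameCycle i j) :
    (w * swap i j).SameCycle i j := by
  have hw : (w * swap i j).SameCycle j (w i) := by
    simpa using (sameCycle_apply_right (f := w * swap i j)).2 (.refl _ j)
  -- Follow the `w`-cycle of `i`, which avoids `j`, from `w i` back to `i`.
  refine (sameCycle_induction (w := w) (x := w i) (y := i)
    (p := fun z => (w * swap i j).SameCycle j z ∧ w.SameCycle i z) (fun z hz => ?_)
    (sameCycle_apply_left.2 .rfl) ⟨hw, sameCycle_apply_right.2 .rfl⟩).1.symm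
  refine ⟨?_, by simpa using hz.2⟩
  rcases eq_or_ne z i with rfl | hzi
  · exact hw
  · have hzj : z ≠ j := fun h => hij (h ▸ hz.2)
    simpa [swap_apply_of_ne_of_ne hzi hzj] using
      (sameCycle_apply_right (f := w * swap i j)).2 hz.1

theorem sameCycle_mul_swap_of_sameCycle (hij : ¬ w.SameCycle i j) {x y : α}
    (hxy : w.SameCycle x y) : (w * swap i j).SameCycle x y :=
  sameCycle_of_sameCycle_mul_swap (sameCycle_mul_swap_of_not_sameCycle hij)
    (by rwa [mul_swap_mul_self])

end SameCycle

section NormPerm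

variable {n : ℕ}

theorem cycleCount_eq_card_quotient (w : Perm (Fin n)) :
    cycleCount w = Nat.card (Quotient (SameCycle.setoid w)) := by
  rw [cycleCount, ← Nat.card_coe_set_eq]
  refine Nat.card_congr (Equiv.ofBijective (fun x => Quotient.mk _ x.1) ⟨?_, ?_⟩)
  · rintro ⟨x, hx⟩ ⟨y, hy⟩ hxy
    have hxy : w.SameCycle x y := Quotient.exact hxy
    exact Subtype.ext (le_antisymm (hx y hxy) (hy x hxy.symm))
  · refine Quotient.ind fun x => ?_
    obtain ⟨m, hm, hmin⟩ :=
      Set.exists_min_image {y | w.SameCycle x y} id (Set.toFinite _) ⟨x, .rfl⟩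
    exact ⟨⟨m, fun y hy => hmin y (hm.trans hy)⟩, Quotient.sound hm.symm⟩

theorem normPerm_add_cycleCount (w : Perm (Fin n)) : normPerm w + cycleCount w = n :=
  Nat.sub_add_cancel ((Set.ncard_le_card _).trans_eq (Nat.card_fin n))

theorem normPerm_one : normPerm (1 : Perm (Fin n)) = 0 := by
  simp [normPerm, cycleCount, Set.ncard_univ]

theorem normPerm_mul_swap_le (w : Perm (Fin n)) (i j : Fin n) :
    normPerm (w * swap i j) ≤ normPerm w + 1 := by
  classical
  let mk : Fin n → Quotient (SameCycle.setoid w) := Quotient.mk _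
  have mk_apply (x : Fin n) : mk (w x) = mk x := Quotient.sound (sameCycle_apply_left.2 .rfl)
  -- Gluing the `w`-cycle of `i` to that of `j` yields a function constant on the new cycles.
  let glue : Fin n → Quotient (SameCycle.setoid w) :=
    fun x => Function.update id (mk i) (mk j) (mk x)
  have glue_apply (x : Fin n) : glue ((w * swap i j) x) = glue x := by
    simp only [glue, Perm.mul_apply, mk_apply, swap_apply_def]
    split_ifs with hi hj <;> simp_all [Function.update_apply]
  let f : Quotient (SameCycle.setoid (w * swap i j)) → Quotient (SameCycle.setoid w) :=
    Quotient.lift glue fun _ _ => eq_of_sameCycle glue_apply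
  have hf : Set.univ ⊆ insert (mk i) (Set.range f) := by
    rintro ⟨x⟩ -
    by_cases hx : mk x = mk i
    · exact .inl hx
    · exact .inr ⟨Quotient.mk _ x, Function.update_of_ne hx _ _⟩
  have hcard : cycleCount w ≤ cycleCount (w * swap i j) + 1 := by
    rw [cycleCount_eq_card_quotient, cycleCount_eq_card_quotient, ← Set.ncard_univ]
    calc Set.univ.ncard ≤ (insert (mk i) (Set.range f)).ncard := Set.ncard_le_ncard hf
      _ ≤ (Set.range f).ncard + 1 := Set.ncard_insert_le _ _
      _ ≤ _ := by
        gcongr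
        rw [← Nat.card_coe_set_eq]
        exact Finite.card_range_le f
  have := normPerm_add_cycleCount w
  have := normPerm_add_cycleCount (w * swap i j)
  omega

theorem normPerm_lt_normPerm_mul_swap {w : Perm (Fin n)} {i j : Fin n}
    (hij : ¬ w.SameCycle i j) : normPerm w < normPerm (w * swap i j) := by
  classical
  let f : Quotient (SameCycle.setoid w) → Quotient (SameCycle.setoid (w * swap i j)) :=
    Quotient.map id fun _ _ => sameCycle_mul_swap_of_sameCycle hij
  have f_surjective : Function.Surjective f := Quotient.ind fun x => ⟨Quotient.mk _ x, rfl⟩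
  have f_not_injective : ¬ Function.Injective f := fun hf =>
    hij (Quotient.exact (hf (Quotient.sound (sameCycle_mul_swap_of_not_sameCycle hij))))
  have hcard : cycleCount (w * swap i j) < cycleCount w := by
    rw [cycleCount_eq_card_quotient, cycleCount_eq_card_quotient, Nat.card_eq_fintype_card,
      Nat.card_eq_fintype_card]
    exact Fintype.card_lt_of_surjective_not_injective f f_surjective f_not_injective
  have := normPerm_add_cycleCount w
  have := normPerm_add_cycleCount (w * swap i j)
  omega

end NormPerm

section IsReduced

variable {n : ℕ}

/-- A reduced word: a list of transpositions of the least possible length for its product, i.e. a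
minimal factorization of that product. -/
def IsReduced (L : List (Perm (Fin n))) : Prop :=
  (∀ t ∈ L, t.IsSwap) ∧ normPerm L.prod = L.length

theorem normPerm_prod_le_length {L : List (Perm (Fin n))} (hL : ∀ t ∈ L, t.IsSwap) :
    normPerm L.prod ≤ L.length := by
  induction L using List.reverseRecOn with
  | nil => exact normPerm_one.le
  | append_singleton L t ih =>
    obtain ⟨i, j, -, rfl⟩ := hL t (by simp)
    rw [List.prod_append, List.prod_singleton, List.length_append, List.length_singleton]
    have := ih fun t ht => hL t (by simp [ht])
    exact (normPerm_mul_swap_le L.prod i j).trans (by gcongr)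

theorem IsReduced.of_concat {L : List (Perm (Fin n))} {t : Perm (Fin n)}
    (h : IsReduced (L ++ [t])) : IsReduced L := by
  obtain ⟨hswap, hnorm⟩ := h
  have hL : ∀ s ∈ L, s.IsSwap := fun s hs => hswap s (by simp [hs])
  obtain ⟨i, j, -, rfl⟩ := hswap t (by simp)
  rw [List.prod_append, List.prod_singleton, List.length_append, List.length_singleton] at hnorm
  have := normPerm_mul_swap_le L.prod i j
  exact ⟨hL, (normPerm_prod_le_length hL).antisymm (by omega)⟩

theorem IsReduced.sameCycle_concat {L : List (Perm (Fin n))} {i j : Fin n}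
    (h : IsReduced (L ++ [swap i j])) : (L ++ [swap i j]).prod.SameCycle i j := by
  by_contra hij
  have hlt := normPerm_lt_normPerm_mul_swap hij
  rw [h.2, List.prod_append, List.prod_singleton, mul_swap_mul_self, h.of_concat.2] at hlt
  simp at hlt

theorem IsReduced.sameCycle_of_mem {L : List (Perm (Fin n))} (h : IsReduced L) {i j : Fin n}
    (hij : swap i j ∈ L) : L.prod.SameCycle i j := by
  induction L using List.reverseRecOn with
  | nil => simp at hij
  | append_singleton L t ih =>
    rcases List.mem_append.1 hij with hmem | hmem
    · obtain ⟨a, b, -, rfl⟩ := h.1 t (by simp)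
      refine sameCycle_of_sameCycle_mul_swap h.sameCycle_concat ?_
      rw [List.prod_append, List.prod_singleton, mul_swap_mul_self]
      exact ih h.of_concat hmem
    · obtain rfl := List.mem_singleton.1 hmem
      exact h.sameCycle_concat

theorem exists_isReduced_prod_eq (w : Perm (Fin n)) : ∃ L, IsReduced L ∧ L.prod = w := by
  induction hr : normPerm w using Nat.strong_induction_on generalizing w with
  | _ r ih =>
    by_cases hw : w = 1
    · exact ⟨[], ⟨by simp, normPerm_one⟩, hw.symm⟩
    obtain ⟨x, hx⟩ : ∃ x, w x ≠ x := by
      simpa [Equiv.ext_iff] using hw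
    have hne : x ≠ w⁻¹ x := fun h => hx (eq_inv_iff_eq.1 h)
    have hfix : Function.IsFixedPt (w * swap x (w⁻¹ x)) x := by simp [Function.IsFixedPt]
    have hlt := normPerm_lt_normPerm_mul_swap fun h => hne (h.eq_of_left hfix)
    have hle := normPerm_mul_swap_le (w * swap x (w⁻¹ x)) x (w⁻¹ x)
    rw [mul_swap_mul_self] at hlt hle
    obtain ⟨L, ⟨hswap, hnorm⟩, hprod⟩ := ih _ (hr ▸ hlt) _ rfl
    have hprod' : (L ++ [swap x (w⁻¹ x)]).prod = w := by simp [hprod]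
    refine ⟨L ++ [swap x (w⁻¹ x)], ⟨fun t ht => ?_, ?_⟩, hprod'⟩
    · rcases List.mem_append.1 ht with ht | ht
      · exact hswap t ht
      · exact ⟨x, w⁻¹ x, hne, List.mem_singleton.1 ht⟩
    · rw [hprod', List.length_append, List.length_singleton, ← hnorm, hprod]
      omega

end IsReduced

section HasIncreasingCycles

/-- Every cycle of `w` reads `x₁ < x₂ < ⋯ < x_r` when it is started at its smallest element: an
element which is not the largest one of its cycle is sent to the next larger one. -/
def HasIncreasingCycles {α : Type*} [LinearOrder α] (w : Perm α) : Prop :=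
  ∀ ⦃x y⦄, w.SameCycle x y → x < y → x < w x ∧ w x ≤ y

theorem hasIncreasingCycles_finRotate (n : ℕ) : HasIncreasingCycles (finRotate n) := by
  rcases n with - | n
  · exact fun x => x.elim0
  intro x y _ hxy
  have hx : (finRotate (n + 1) x : ℕ) = x + 1 :=
    coe_finRotate_of_ne_last (hxy.trans_le y.le_last).ne
  simp only [Fin.lt_def, Fin.le_def, hx] at hxy ⊢
  omega

section Split

variable {α : Type*} [LinearOrder α] [Finite α] {w : Perm α} {i j : α}

theorem HasIncreasingCycles.mem_Ioc_of_sameCycle_mul_swap (hw : HasIncreasingCycles w)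
    (hij : w.SameCycle i j) {x y : α} (hxy : (w * swap i j).SameCycle x y)
    (hx : w.SameCycle i x ∧ x ∈ Set.Ioc i j) : y ∈ Set.Ioc i j := by
  refine (sameCycle_induction (p := fun z => w.SameCycle i z ∧ z ∈ Set.Ioc i j) ?_ hxy hx).2
  rintro z ⟨hiz, hz, hzj⟩
  rw [Perm.mul_apply]
  rcases hzj.eq_or_lt with rfl | hzj
  · rw [swap_apply_right]
    exact ⟨sameCycle_apply_right.2 .rfl, hw hij hz⟩
  · rw [swap_apply_of_ne_of_ne hz.ne' hzj.ne]
    have hnext := hw (hiz.symm.trans hij) hzj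
    exact ⟨by simpa using hiz, hz.trans hnext.1, hnext.2⟩

theorem HasIncreasingCycles.mul_swap (hw : HasIncreasingCycles w) (hlt : i < j)
    (hij : w.SameCycle i j) : HasIncreasingCycles (w * swap i j) := by
  intro x y hxy hx
  have hxy' := sameCycle_of_sameCycle_mul_swap hij hxy
  rw [Perm.mul_apply]
  rcases eq_or_ne x i with rfl | hxi
  · have hjy : j < y := by
      by_contra! hyj
      exact (hw.mem_Ioc_of_sameCycle_mul_swap hij hxy.symm ⟨hxy', hx, hyj⟩).1.false
    have hnext := hw (hij.symm.trans hxy') hjy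
    rw [swap_apply_left]
    exact ⟨hlt.trans hnext.1, hnext.2⟩
  rcases eq_or_ne x j with rfl | hxj
  · exact absurd (hw.mem_Ioc_of_sameCycle_mul_swap hij hxy ⟨hij, hlt, le_rfl⟩).2 hx.not_ge
  · rw [swap_apply_of_ne_of_ne hxi hxj]
    exact hw hxy' hx

end Split

theorem exists_lt_eq_swap {α : Type*} [LinearOrder α] {t : Perm α} (ht : t.IsSwap) :
    ∃ i j, i < j ∧ t = swap i j := by
  obtain ⟨i, j, hij, rfl⟩ := ht
  rcases hij.lt_or_gt with h | h
  · exact ⟨i, j, h, rfl⟩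
  · exact ⟨j, i, h, swap_comm i j⟩

variable {n : ℕ}

theorem HasIncreasingCycles.of_concat {L : List (Perm (Fin n))} {t : Perm (Fin n)}
    (hw : HasIncreasingCycles (L ++ [t]).prod) (hL : IsReduced (L ++ [t])) :
    HasIncreasingCycles L.prod := by
  obtain ⟨i, j, hij, rfl⟩ := exists_lt_eq_swap (hL.1 t (by simp))
  simpa using hw.mul_swap hij hL.sameCycle_concat

theorem HasIncreasingCycles.of_append {L L' : List (Perm (Fin n))}
    (hw : HasIncreasingCycles (L ++ L').prod) (hL : IsReduced (L ++ L')) :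
    HasIncreasingCycles L.prod := by
  induction L' using List.reverseRecOn with
  | nil => simpa using hw
  | append_singleton L' t ih =>
    rw [← List.append_assoc] at hw hL
    exact ih (hw.of_concat hL) hL.of_concat

theorem HasIncreasingCycles.of_precLe {σ w : Perm (Fin n)} (hw : HasIncreasingCycles w)
    (h : precLe σ w) : HasIncreasingCycles σ := by
  obtain ⟨L, hL, hLσ⟩ := exists_isReduced_prod_eq σ
  obtain ⟨L', hL', hLσ'⟩ := exists_isReduced_prod_eq (σ⁻¹ * w)
  have hprod : (L ++ L').prod = w := by rw [List.prod_append, hLσ, hLσ', mul_inv_cancel_left]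
  rw [← hLσ]
  refine HasIncreasingCycles.of_append (L' := L') (hprod ▸ hw) ⟨fun t ht => ?_, ?_⟩
  · exact (List.mem_append.1 ht).elim (hL.1 t) (hL'.1 t)
  · rw [hprod, List.length_append, ← hL.2, ← hL'.2, hLσ, hLσ']
    exact h

end HasIncreasingCycles

section SortedWords

theorem support_min_swap {α : Type*} [LinearOrder α] [Fintype α] {i j : α} (h : i < j) :
    (swap i j).support.min = i := by
  rw [support_swap h.ne, Finset.min_insert, Finset.min_singleton]
  exact min_eq_left (WithTop.coe_le_coe.2 h.le)

theorem prod_apply_eq_self {α : Type*} {L : List (Perm α)} {x : α} (h : ∀ t ∈ L, t x = x) :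
    L.prod x = x :=
  (MulAction.stabilizer (Perm α) x).list_prod_mem h

variable {n : ℕ}

theorem IsReduced.prod_concat_apply {L : List (Perm (Fin n))} {i j : Fin n} (hij : i < j)
    (hL : IsReduced (L ++ [swap i j])) (hw : HasIncreasingCycles (L ++ [swap i j]).prod)
    (hmin : ∀ t ∈ L, t.support.min ≤ i) : (L ++ [swap i j]).prod i = j := by
  suffices hfix : L.prod j = j by simpa using hfix
  refine prod_apply_eq_self fun t ht => ?_
  by_contra htj
  obtain ⟨a, b, hab, rfl⟩ := exists_lt_eq_swap (hL.1 t (by simp [ht]))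
  have hai : a ≤ i := by simpa [support_min_swap hab] using hmin _ ht
  have hja : L.prod.SameCycle j a := by
    have hab' := hL.of_concat.sameCycle_of_mem ht
    rcases (swap_apply_ne_self_iff.1 htj).2 with rfl | rfl
    · exact .rfl
    · exact hab'.symm
  have ha : a ∈ Set.Ioc i j := hw.mem_Ioc_of_sameCycle_mul_swap hL.sameCycle_concat
    (by simpa using hja) ⟨hL.sameCycle_concat, hij, le_rfl⟩
  exact ha.1.not_ge hai

theorem IsReduced.eq_of_prod_eq_of_pairwise {L L' : List (Perm (Fin n))} (hL : IsReduced L)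
    (hL' : IsReduced L') (hw : HasIncreasingCycles L.prod) (hprod : L.prod = L'.prod)
    (hmin : L.map (·.support.min) = L'.map (·.support.min))
    (hsorted : L.Pairwise (·.support.min ≤ ·.support.min)) : L = L' := by
  induction L using List.reverseRecOn generalizing L' with
  | nil => exact (List.map_eq_nil_iff.1 hmin.symm).symm
  | append_singleton L t ih =>
    rcases L'.eq_nil_or_concat' with rfl | ⟨L', t', rfl⟩
    · simp at hmin
    obtain ⟨i, j, hij, rfl⟩ := exists_lt_eq_swap (hL.1 t (by simp))
    obtain ⟨i', j', hij', rfl⟩ := exists_lt_eq_swap (hL'.1 t' (by simp))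
    obtain ⟨hinit, hlast⟩ : L.map (·.support.min) = L'.map (·.support.min) ∧ i = i' := by
      simpa [-Finset.min_insert, support_min_swap, hij, hij'] using hmin
    subst hlast
    obtain ⟨hsorted, -, hle⟩ := List.pairwise_append.1 hsorted
    have hle : ∀ t ∈ L, t.support.min ≤ i := fun t ht =>
      (hle t ht _ (List.mem_singleton_self _)).trans_eq (support_min_swap hij)
    have hle' : ∀ t ∈ L', t.support.min ≤ i := fun t ht => by
      obtain ⟨s, hs, hst⟩ := List.mem_map.1 (hinit ▸ List.mem_map_of_mem ht)
      exact hst ▸ hle s hs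
    obtain rfl : j = j' := by
      rw [← hL.prod_concat_apply hij hw hle, hprod, hL'.prod_concat_apply hij' (hprod ▸ hw) hle']
    rw [ih hL.of_concat hL'.of_concat (hw.of_concat hL) (by simpa using hprod) hinit hsorted]

end SortedWords

section Moves

theorem support_min_conj {α : Type*} [LinearOrder α] [Fintype α] {σ τ : Perm α}
    (h : σ.support.min < τ.support.min) : (τ * σ * τ⁻¹).support.min = σ.support.min := by
  have hfix {x : α} (hx : ↑x < τ.support.min) : τ x = x :=
    notMem_support.1 fun hmem => (Finset.min_le hmem).not_gt hx
  obtain ⟨i, hi⟩ := Finset.min_of_nonempty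
    (Finset.nonempty_iff_ne_empty.2 (mt Finset.min_eq_top.2 h.ne_top))
  rw [hi] at h ⊢
  rw [support_conj]
  refine le_antisymm (Finset.min_le ?_) (Finset.le_min fun y hy => WithTop.coe_le_coe.2 ?_)
  · exact Finset.mem_map.2 ⟨i, Finset.mem_of_min hi, hfix h⟩
  · obtain ⟨x, hx, rfl⟩ := Finset.mem_map.1 hy
    by_cases hτx : τ x = x
    · simpa [hτx] using Finset.min_le_of_eq hx hi
    · have hmem : τ x ∈ τ.support := apply_mem_support.2 (mem_support.2 hτx)
      exact (WithTop.coe_lt_coe.1 (h.trans_le (Finset.min_le hmem))).le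

theorem mul_self_eq_one_of_isSwap {α : Type*} [DecidableEq α] {t : Perm α} (ht : t.IsSwap) :
    t * t = 1 := by
  obtain ⟨i, j, -, rfl⟩ := ht
  exact swap_mul_self i j

theorem inv_eq_self_of_isSwap {α : Type*} [DecidableEq α] {t : Perm α} (ht : t.IsSwap) :
    t⁻¹ = t :=
  inv_eq_of_mul_eq_one_left (mul_self_eq_one_of_isSwap ht)

theorem isSwap_mul_mul_self {α : Type*} [DecidableEq α] {s t : Perm α} (hs : s.IsSwap)
    (ht : t.IsSwap) : (t * s * t).IsSwap := by
  obtain ⟨i, j, hij, rfl⟩ := hs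
  refine ⟨t i, t j, t.injective.ne hij, ?_⟩
  rw [swap_apply_apply, inv_eq_self_of_isSwap ht]

theorem prod_ofFn_eq_take_mul_drop {M : Type*} [Monoid M] {k : ℕ} (f : Fin k → M) {a b : Fin k}
    (hab : (b : ℕ) = a + 1) : (List.ofFn f).prod =
      ((List.ofFn f).take a).prod * (f a * f b) * ((List.ofFn f).drop (b + 1)).prod := by
  have htake : ((List.ofFn f).take b).prod = ((List.ofFn f).take a).prod * f a := by
    rw [hab, List.prod_take_succ _ _ (by simp), List.getElem_ofFn]
  rw [← List.prod_take_mul_prod_drop _ (b + 1 : ℕ), List.prod_take_succ _ _ (by simp), htake,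
    List.getElem_ofFn, mul_assoc _ (f a)]

theorem prod_ofFn_update_update {M : Type*} [Monoid M] {k : ℕ} (f : Fin k → M) {a b : Fin k}
    (hab : (b : ℕ) = a + 1) {x y : M} (hxy : x * y = f a * f b) :
    (List.ofFn (Function.update (Function.update f a x) b y)).prod = (List.ofFn f).prod := by
  set g := Function.update (Function.update f a x) b y with hg
  have hne : a ≠ b := by rintro rfl; omega
  have htake : (List.ofFn g).take a = (List.ofFn f).take a :=
    List.ext_getElem (by simp) (by grind)
  have hdrop : (List.ofFn g).drop (b + 1) = (List.ofFn f).drop (b + 1) :=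
    List.ext_getElem (by simp) (by grind)
  rw [prod_ofFn_eq_take_mul_drop g hab, prod_ofFn_eq_take_mul_drop f hab, htake, hdrop, ← hxy]
  simp [hg, hne]

variable {n k : ℕ} {γ : Fin k → Perm (Fin n)} {a b : Fin k}

theorem slGen_of_min_eq (h : (γ a).support.min = (γ b).support.min) : slGen γ a b = γ :=
  funext fun _ => if_pos h

theorem slGen_of_min_lt (hab : a ≠ b) (h : (γ a).support.min < (γ b).support.min) :
    slGen γ a b = Function.update (Function.update γ a (γ b)) b (γ b * γ a * γ b) := by
  ext1 m
  rw [slGen, if_neg h.ne, if_pos h]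
  grind [Function.update_apply]

theorem slGen_of_min_gt (hab : a ≠ b) (h : (γ b).support.min < (γ a).support.min) :
    slGen γ a b = Function.update (Function.update γ a (γ a * γ b * γ a)) b (γ a) := by
  ext1 m
  rw [slGen, if_neg h.ne', if_neg h.not_gt]
  grind [Function.update_apply]

theorem isSwap_slGen (hγ : ∀ m, (γ m).IsSwap) (m : Fin k) : (slGen γ a b m).IsSwap := by
  unfold slGen
  split_ifs
  all_goals first | exact hγ _ | exact isSwap_mul_mul_self (hγ _) (hγ _)

theorem prod_ofFn_slGen (hγ : ∀ m, (γ m).IsSwap) (hab : (b : ℕ) = a + 1) :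
    (List.ofFn (slGen γ a b)).prod = (List.ofFn γ).prod := by
  have hne : a ≠ b := by rintro rfl; omega
  have hsq (m : Fin k) : γ m * γ m = 1 := mul_self_eq_one_of_isSwap (hγ m)
  rcases lt_trichotomy (γ a).support.min (γ b).support.min with h | h | h
  · rw [slGen_of_min_lt hne h]
    exact prod_ofFn_update_update γ hab (by rw [← mul_assoc, ← mul_assoc, hsq, one_mul])
  · rw [slGen_of_min_eq h]
  · rw [slGen_of_min_gt hne h]
    exact prod_ofFn_update_update γ hab (by rw [mul_assoc, hsq, mul_one])

theorem support_min_slGen (hγ : ∀ m, (γ m).IsSwap) (hab : a ≠ b) (m : Fin k) :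
    (slGen γ a b m).support.min = (γ (swap a b m)).support.min := by
  have hconj {c d : Fin k} (h : (γ c).support.min < (γ d).support.min) :
      (γ d * γ c * γ d).support.min = (γ c).support.min := by
    simpa [inv_eq_self_of_isSwap (hγ d)] using support_min_conj h
  rcases lt_trichotomy (γ a).support.min (γ b).support.min with h | h | h
  · rw [slGen_of_min_lt hab h, Function.update_apply, Function.update_apply, swap_apply_def]
    grind
  · rw [slGen_of_min_eq h, swap_apply_def]
    grind
  · rw [slGen_of_min_gt hab h, Function.update_apply, Function.update_apply, swap_apply_def]
    grind

theorem slGen_slGen (hγ : ∀ m, (γ m).IsSwap) (hab : a ≠ b) : slGen (slGen γ a b) a b = γ := by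
  have hsq (m : Fin k) : γ m * γ m = 1 := mul_self_eq_one_of_isSwap (hγ m)
  have hmin_a : (slGen γ a b a).support.min = (γ b).support.min := by
    rw [support_min_slGen hγ hab, swap_apply_left]
  have hmin_b : (slGen γ a b b).support.min = (γ a).support.min := by
    rw [support_min_slGen hγ hab, swap_apply_right]
  rcases lt_trichotomy (γ a).support.min (γ b).support.min with h | h | h
  · rw [slGen_of_min_gt hab (by rwa [hmin_a, hmin_b]), slGen_of_min_lt hab h]
    grind [Function.update_apply]
  · rw [slGen_of_min_eq h, slGen_of_min_eq h]
  · rw [slGen_of_min_lt hab (by rwa [hmin_a, hmin_b]), slGen_of_min_gt hab h]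
    grind [Function.update_apply]

theorem slGen_mem_sigmaSet (hγ : γ ∈ SigmaSet n k) (hab : (b : ℕ) = a + 1) :
    slGen γ a b ∈ SigmaSet n k := by
  refine ⟨isSwap_slGen hγ.1, ?_⟩
  rw [prod_ofFn_slGen hγ.1 hab]
  exact hγ.2

end Moves

section Lifts

variable {n k : ℕ}

theorem isReduced_ofFn {γ : Fin k → Perm (Fin n)} (hγ : γ ∈ SigmaSet n k) :
    IsReduced (List.ofFn γ) :=
  ⟨List.forall_mem_ofFn_iff.2 hγ.1, by rw [hγ.2.1, List.length_ofFn]⟩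

theorem hasIncreasingCycles_prod_ofFn {γ : Fin k → Perm (Fin n)} (hγ : γ ∈ SigmaSet n k) :
    HasIncreasingCycles (List.ofFn γ).prod :=
  (hasIncreasingCycles_finRotate n).of_precLe hγ.2.2

/-- A lift of `π ∈ S_k` along `P` to an injective self-map of `Σ_n(k)` which preserves the product
`τ₁∘⋯∘τ_k`. The lifts of the permutations constitute the action. -/
structure IsLift (π : Perm (Fin k)) (f : SigmaSet n k → SigmaSet n k) : Prop where
  injective : Function.Injective f
  prod_eq (γ : SigmaSet n k) : (List.ofFn (f γ).1).prod = (List.ofFn γ.1).prod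
  pmap_eq (γ : SigmaSet n k) : Pmap (f γ).1 = fun m => Pmap γ.1 (π⁻¹ m)

theorem IsLift.one : IsLift (1 : Perm (Fin k)) (id : SigmaSet n k → SigmaSet n k) :=
  ⟨Function.injective_id, fun _ => rfl, fun _ => rfl⟩

theorem IsLift.mul {π ρ : Perm (Fin k)} {f g : SigmaSet n k → SigmaSet n k} (hf : IsLift π f)
    (hg : IsLift ρ g) : IsLift (π * ρ) (f ∘ g) where
  injective := hf.injective.comp hg.injective
  prod_eq γ := (hf.prod_eq (g γ)).trans (hg.prod_eq γ)
  pmap_eq γ := by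
    rw [Function.comp_apply, hf.pmap_eq, hg.pmap_eq, mul_inv_rev]
    rfl

theorem isLift_swap {a b : Fin k} (hab : (b : ℕ) = a + 1) :
    IsLift (swap a b) fun γ : SigmaSet n k => ⟨slGen γ.1 a b, slGen_mem_sigmaSet γ.2 hab⟩ where
  injective γ γ' h := by
    have hne : a ≠ b := by rintro rfl; omega
    have h : slGen γ.1 a b = slGen γ'.1 a b := congrArg Subtype.val h
    rw [Subtype.ext_iff, ← slGen_slGen γ.2.1 hne, h, slGen_slGen γ'.2.1 hne]
  prod_eq γ := prod_ofFn_slGen γ.2.1 hab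
  pmap_eq γ := by
    rw [swap_inv]
    exact funext (support_min_slGen γ.2.1 (by rintro rfl; omega))

theorem exists_isLift (π : Perm (Fin k)) : ∃ f : SigmaSet n k → SigmaSet n k, IsLift π f := by
  rcases k with - | k
  · exact ⟨id, Subsingleton.elim 1 π ▸ IsLift.one⟩
  have hπ : π ∈ Submonoid.closure (Set.range fun i : Fin k => swap i.castSucc i.succ) :=
    mclosure_swap_castSucc_succ k ▸ Submonoid.mem_top π
  induction hπ using Submonoid.closure_induction with
  | mem _ h =>
    obtain ⟨i, rfl⟩ := h
    exact ⟨_, isLift_swap (by simp)⟩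
  | one => exact ⟨id, .one⟩
  | mul π ρ _ _ hπ hρ =>
    obtain ⟨f, hf⟩ := hπ
    obtain ⟨g, hg⟩ := hρ
    exact ⟨f ∘ g, hf.mul hg⟩

theorem eq_of_prod_eq_of_monotone {γ γ' : SigmaSet n k}
    (hprod : (List.ofFn γ.1).prod = (List.ofFn γ'.1).prod) (hP : Pmap γ.1 = Pmap γ'.1)
    (hmono : Monotone fun m => (γ.1 m).support.min) : γ = γ' := by
  refine Subtype.ext (List.ofFn_injective ?_)
  refine (isReduced_ofFn γ.2).eq_of_prod_eq_of_pairwise (isReduced_ofFn γ'.2)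
    (hasIncreasingCycles_prod_ofFn γ.2) hprod ?_ (List.pairwise_ofFn.2 fun _ _ h => hmono h.le)
  rw [List.map_ofFn, List.map_ofFn]
  exact congrArg List.ofFn hP

theorem eq_of_prod_eq_of_pmap_eq {γ γ' : SigmaSet n k}
    (hprod : (List.ofFn γ.1).prod = (List.ofFn γ'.1).prod) (hP : Pmap γ.1 = Pmap γ'.1) :
    γ = γ' := by
  -- `Pmap` takes values in `WithBot`, but the minima must be sorted in the order of `WithTop`.
  let minSupport : Fin k → WithTop (Fin n) := fun m => (γ.1 m).support.min
  obtain ⟨f, hf⟩ := exists_isLift (n := n) (Tuple.sort minSupport)⁻¹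
  refine hf.injective (eq_of_prod_eq_of_monotone ?_ ?_ ?_)
  · rw [hf.prod_eq, hf.prod_eq, hprod]
  · rw [hf.pmap_eq, hf.pmap_eq, hP]
  · have hsort : (fun m => ((f γ).1 m).support.min) = minSupport ∘ Tuple.sort minSupport :=
      hf.pmap_eq γ
    exact hsort ▸ Tuple.monotone_sort minSupport

theorem IsLift.unique {π : Perm (Fin k)} {f g : SigmaSet n k → SigmaSet n k} (hf : IsLift π f)
    (hg : IsLift π g) : f = g :=
  funext fun γ => eq_of_prod_eq_of_pmap_eq ((hf.prod_eq γ).trans (hg.prod_eq γ).symm)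
    ((hf.pmap_eq γ).trans (hg.pmap_eq γ).symm)

end Lifts

end HurwitzAction

/-- There is an action • of S_k on Σ_n(k) such that (1) each Coxeter generator
σ_l = (l, l+1) acts by s_l, (2) P is equivariant: P(π • γ) = π · P(γ), where
(π · v)_m = v_{π⁻¹(m)}, and (3) P preserves stabilisers: π • γ = γ iff π · P(γ) = P(γ). -/
theorem stmt18 (n k : ℕ) :
    ∃ act : Equiv.Perm (Fin k) →
        {γ : Fin k → Equiv.Perm (Fin n) // γ ∈ SigmaSet n k} →
        {γ : Fin k → Equiv.Perm (Fin n) // γ ∈ SigmaSet n k},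
      (∀ γ, act 1 γ = γ) ∧
      (∀ π ρ γ, act (π * ρ) γ = act π (act ρ γ)) ∧
      (∀ a b : Fin k, (b : ℕ) = (a : ℕ) + 1 →
        ∀ γ, (act (Equiv.swap a b) γ).1 = slGen γ.1 a b) ∧
      (∀ π γ, Pmap (act π γ).1 = fun m => Pmap γ.1 (π⁻¹ m)) ∧
      (∀ π γ, act π γ = γ ↔ (fun m => Pmap γ.1 (π⁻¹ m)) = Pmap γ.1) := by
  choose act hact using HurwitzAction.exists_isLift (n := n) (k := k)
  refine ⟨act, ?_, ?_, ?_, fun π => (hact π).pmap_eq, fun π γ => ?_⟩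
  · exact congrFun ((hact 1).unique .one)
  · exact fun π ρ => congrFun ((hact (π * ρ)).unique ((hact π).mul (hact ρ)))
  · intro a b hab γ
    rw [(hact (Equiv.swap a b)).unique (HurwitzAction.isLift_swap hab)]
  · rw [← (hact π).pmap_eq γ]
    exact ⟨fun h => by rw [h], HurwitzAction.eq_of_prod_eq_of_pmap_eq ((hact π).prod_eq γ)⟩
end
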